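/- arXiv:1411.1936 — 5 statements merged into one kernel-verified Lean document; each statement's English description precedes it below -/
import Mathlib

section
/- Let η ∈ S₀(ρ) be a Beppo Levi L₀-spline on ρ and let ψ ∈ Λ₀ satisfy ψ(r_j) = 0 for all j ∈ {1,…,n}. If, in addition, either lim_{r→0⁺} ψ(r) = 0, or η is non-singular, then ⟨η, ψ⟩₀ = 0. -/
open MeasureTheory Set Filter

noncomputable section

/-- The radial Beppo Levi energy space `Λ₀`: functions `f : (0,∞) → ℂ` of class `C¹`
whose derivative `f′` is locally absolutely continuous on compact subintervals of `(0,∞)`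
(encoded by the fundamental theorem of calculus with an integrable density `f″`),
and whose radial Beppo Levi energy `∫₀^∞ ( r·|f″(r)|² + (1/r)·|f′(r)|² ) dr` is finite. -/
structure Lambda0 where
  f : ℝ → ℂ
  f' : ℝ → ℂ
  f'' : ℝ → ℂ
  hasDeriv : ∀ r ∈ Set.Ioi (0:ℝ), HasDerivAt f (f' r) r
  contDeriv : ContinuousOn f' (Set.Ioi 0)
  locAC : ∀ a b : ℝ, 0 < a → a ≤ b →
    MeasureTheory.IntegrableOn f'' (Set.Icc a b) ∧
      ∀ x ∈ Set.Icc a b, f' x = f' a + ∫ t in a..x, f'' t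
  energyFin : MeasureTheory.IntegrableOn
    (fun r : ℝ => r * ‖f'' r‖ ^ 2 + (1 / r) * ‖f' r‖ ^ 2) (Set.Ioi 0)

/-- The squared radial Beppo Levi energy `‖·‖₀²` of a function with first derivative `g'`
and second derivative `g''`. -/
def energySq (g' g'' : ℝ → ℂ) : ℝ :=
  ∫ r in Set.Ioi (0:ℝ), (r * ‖g'' r‖ ^ 2 + (1 / r) * ‖g' r‖ ^ 2)

/-- The seminorm `‖f‖₀`. -/
def Lambda0.seminorm0 (F : Lambda0) : ℝ :=
  Real.sqrt (energySq F.f' F.f'')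

/-- The semi-inner product `⟨f,g⟩₀`. -/
def innerBL (F G : Lambda0) : ℂ :=
  ∫ r in Set.Ioi (0:ℝ),
    ((r : ℂ) * F.f'' r * (starRingEnd ℂ) (G.f'' r) +
      (1 / (r : ℂ)) * F.f' r * (starRingEnd ℂ) (G.f' r))

/-- A Beppo Levi `L₀`-spline on the positive knots `r 1 < r 2 < … < r n`:
piecewise of the form `a·x² + b·x²·ln x + c + d·ln x` between consecutive knots,
of the form `a·x² + b·x²·ln x + c` on `(0, r 1)`, of the form `c + d·ln x` on `(r n, ∞)`,
`C²` throughout `(0,∞)`, and continuously extended at `0`. -/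
structure IsBLSpline (n : ℕ) (r : ℕ → ℝ) (η : ℝ → ℂ) : Prop where
  pieces : ∀ j : ℕ, 1 ≤ j → j + 1 ≤ n → ∃ a b c d : ℂ,
    ∀ x ∈ Set.Ioo (r j) (r (j + 1)),
      η x = a * (x : ℂ) ^ 2 + b * (x : ℂ) ^ 2 * (Real.log x : ℂ) + c + d * (Real.log x : ℂ)
  left : ∃ a b c : ℂ, ∀ x ∈ Set.Ioo (0 : ℝ) (r 1),
      η x = a * (x : ℂ) ^ 2 + b * (x : ℂ) ^ 2 * (Real.log x : ℂ) + c
  right : ∃ c d : ℂ, ∀ x ∈ Set.Ioi (r n), η x = c + d * (Real.log x : ℂ)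
  smooth : ContDiffOn ℝ 2 η (Set.Ioi 0)
  cont0 : ContinuousWithinAt η (Set.Ici 0) 0

/-- A Beppo Levi `L₀`-spline is non-singular if on `(0, r₁)` it has the form `a·x² + c`. -/
def NonSingularBLS (r1 : ℝ) (η : ℝ → ℂ) : Prop :=
  ∃ a c : ℂ, ∀ x ∈ Set.Ioo (0 : ℝ) r1, η x = a * (x : ℂ) ^ 2 + c

/-- Rabut's kernel `K`. -/
def Kfun (r t : ℝ) : ℝ :=
  if r ≤ t then 0 else (1 / 4) * (t ^ 2 - r ^ 2 + (r ^ 2 + t ^ 2) * Real.log (r / t))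

/-- The limiting kernel `H_{0,∞}` (with left endpoint knot `r1`). -/
def Hfun (r1 r t : ℝ) : ℝ :=
  Kfun r t - Kfun r r1 - Kfun r1 t + (1 / 4) * (r ^ 2 - r1 ^ 2) * Real.log (t / r1)

/-- The basis function `φ₀`. -/
def phi0 (r : ℝ) : ℝ :=
  if r ≤ 1 then r ^ 2 - r ^ 2 * Real.log r else 1 + Real.log r

/-- Johnson's compactly supported profile `η₂`. -/
def eta2 (x : ℝ) : ℂ :=
  (((4 / 3 : ℝ) * (Real.log 2 - phi0 x + phi0 (x / 2)) : ℝ) : ℂ)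

/-- The non-singular compactly supported profile `β`. -/
def betaFn (x : ℝ) : ℂ :=
  (((1 / 5 : ℝ) * (27 * Real.log 3 - 32 * Real.log 2 + 5 * phi0 x
      - 32 * phi0 (x / 2) + 27 * phi0 (x / 3)) : ℝ) : ℂ)

/-- `Ker L₀ = span{r², r² ln r, 1, ln r}`, as functions on `(0,∞)`. -/
def KerL0 : Set (ℝ → ℂ) :=
  {η | ∃ a b c d : ℂ, ∀ x : ℝ, 0 < x →
    η x = a * (x : ℂ) ^ 2 + b * (x : ℂ) ^ 2 * (Real.log x : ℂ) + c + d * (Real.log x : ℂ)}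

/-- `α(h) = inf_{η ∈ Ker L₀} sup_{t ∈ [0,1]} |t^μ − η(1+th)|`. -/
def alphaFn (μ h : ℝ) : ℝ :=
  sInf {v : ℝ | ∃ η ∈ KerL0,
    v = sSup ((fun t : ℝ => ‖((t ^ μ : ℝ) : ℂ) - η (1 + t * h)‖) '' Set.Icc (0 : ℝ) 1)}

theorem ac_ofReal {h : ℝ → ℝ} {a b : ℝ} (hf : AbsolutelyContinuousOnInterval h a b) :
    AbsolutelyContinuousOnInterval (fun x => (h x : ℂ)) a b := by
  rw [absolutelyContinuousOnInterval_iff] at hf ⊢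
  simpa [Complex.dist_of_im_eq, Real.dist_eq] using hf

theorem ac_integral {G : ℝ → ℂ} {p q : ℝ} (hG : IntervalIntegrable G volume p q) :
    AbsolutelyContinuousOnInterval (fun x => ∫ t in p..x, G t) p q := by
  have hre : IntervalIntegrable (fun t => (G t).re) volume p q :=
    ⟨hG.1.re, hG.2.re⟩
  have him : IntervalIntegrable (fun t => (G t).im) volume p q :=
    ⟨hG.1.im, hG.2.im⟩
  have h1 := ac_ofReal (hre.absolutelyContinuousOnInterval_intervalIntegral (c := p) (by simp))
  have h2 := (ac_ofReal (him.absolutelyContinuousOnInterval_intervalIntegral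
    (c := p) (by simp))).const_smul Complex.I
  have h3 := h1.add h2
  rw [absolutelyContinuousOnInterval_iff] at h3 ⊢
  intro ε hε
  obtain ⟨δ, hδ, h⟩ := h3 ε hε
  refine ⟨δ, hδ, fun E hE hl => ?_⟩
  refine lt_of_eq_of_lt (Finset.sum_congr rfl fun i hi => ?_) (h E hE hl)
  have key : ∀ x ∈ uIcc p q, ∫ t in p..x, G t =
      ((fun x => ((∫ t in p..x, (G t).re : ℝ) : ℂ)) +
        fun x => Complex.I • ((∫ t in p..x, (G t).im : ℝ) : ℂ)) x := by
    intro x hx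
    have hsub : uIcc p x ⊆ uIcc p q := uIcc_subset_uIcc_left hx
    have hx1 := hG.mono_set hsub
    have hr := hre.mono_set hsub
    have hi := him.mono_set hsub
    simp only [Pi.add_apply, smul_eq_mul]
    rw [← intervalIntegral.integral_ofReal, ← intervalIntegral.integral_ofReal,
      ← intervalIntegral.integral_const_mul, ← intervalIntegral.integral_add]
    · congr 1
      ext t
      rw [mul_comm, Complex.re_add_im]
    · exact ⟨hr.1.ofReal, hr.2.ofReal⟩
    · exact (show IntervalIntegrable (fun t => ((G t).im : ℂ)) volume p x from
        ⟨hi.1.ofReal, hi.2.ofReal⟩).const_mul _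
  have hm := hE.1 i hi
  rw [key _ hm.1, key _ hm.2]

theorem ibp {F F' G G' : ℝ → ℂ} {p q : ℝ} (hpq : p ≤ q)
    (hF' : IntervalIntegrable F' volume p q) (hG' : IntervalIntegrable G' volume p q)
    (hF : ∀ x ∈ Icc p q, F x = F p + ∫ t in p..x, F' t)
    (hG : ∀ x ∈ Icc p q, G x = G p + ∫ t in p..x, G' t) :
    IntervalIntegrable (fun x => F' x * G x + F x * G' x) volume p q ∧
    ∫ x in p..q, (F' x * G x + F x * G' x) = F q * G q - F p * G p := by
  set F1 : ℝ → ℂ := fun x => F p + ∫ t in p..x, F' t with hF1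
  set G1 : ℝ → ℂ := fun x => G p + ∫ t in p..x, G' t with hG1
  have hc : ∀ c : ℂ, AbsolutelyContinuousOnInterval (fun _ : ℝ => c) p q := fun c =>
    (contDiff_const.contDiffOn).absolutelyContinuousOnInterval
  have aF : AbsolutelyContinuousOnInterval F1 p q := (hc _).add (ac_integral hF')
  have aG : AbsolutelyContinuousOnInterval G1 p q := (hc _).add (ac_integral hG')
  have hint : IntervalIntegrable (fun x => F' x * G1 x + F1 x * G' x) volume p q :=
    (hF'.mul_continuousOn aG.continuousOn).add (hG'.continuousOn_mul aF.continuousOn)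
  have aH := (aF.smul aG).sub (ac_integral hint)
  have hd : ∀ᵐ x, x ∈ uIcc p q → HasDerivAt
      (F1 • G1 - fun x => ∫ t in p..x, (F' t * G1 t + F1 t * G' t)) 0 x := by
    filter_upwards [hF'.ae_hasDerivAt_integral, hG'.ae_hasDerivAt_integral,
      hint.ae_hasDerivAt_integral] with x h1 h2 h3 hx
    have e1 := (h1 hx p (by simp)).const_add (F p)
    have e2 := (h2 hx p (by simp)).const_add (G p)
    have e3 := h3 hx p (by simp)
    have := (e1.mul e2).sub e3
    convert! this using 1
    simp [hF1, hG1]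
  obtain ⟨C, hC⟩ := aH.const_of_ae_hasDerivAt_zero hd
  have c1 := hC p (by simp)
  have c2 := hC q (by simp)
  have eF : ∀ x ∈ Icc p q, F1 x = F x := fun x hx => (hF x hx).symm
  have eG : ∀ x ∈ Icc p q, G1 x = G x := fun x hx => (hG x hx).symm
  have ip : p ∈ Icc p q := ⟨le_rfl, hpq⟩
  have iq : q ∈ Icc p q := ⟨hpq, le_rfl⟩
  simp only [Pi.sub_apply, smul_eq_mul, Pi.mul_apply, eF p ip, eG p ip, eF q iq, eG q iq,
    intervalIntegral.integral_same] at c1 c2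
  have hcongr : EqOn (fun x => F' x * G1 x + F1 x * G' x) (fun x => F' x * G x + F x * G' x)
      (uIcc p q) := by
    intro x hx
    rw [uIcc_of_le hpq] at hx
    simp only [eF x hx, eG x hx]
  refine ⟨hint.congr (fun x hx => hcongr (uIoc_subset_uIcc hx)), ?_⟩
  rw [← intervalIntegral.integral_congr hcongr]
  linear_combination c1 - c2

def Uf (a b d : ℂ) (x : ℝ) : ℂ := 2 * a * x + b * (2 * x * Real.log x + x) + d / x
def Vf (a b d : ℂ) (x : ℝ) : ℂ := 2 * a + b * (2 * Real.log x + 3) - d / x ^ 2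
def Xf (a b d : ℂ) (x : ℝ) : ℂ := 2 * a + b * (2 * Real.log x + 5) + d / x ^ 2

theorem hasDeriv_eta (a b c d : ℂ) {x : ℝ} (hx : 0 < x) :
    HasDerivAt (fun x : ℝ => a * (x : ℂ) ^ 2 + b * (x : ℂ) ^ 2 * (Real.log x : ℂ) + c
      + d * (Real.log x : ℂ)) (Uf a b d x) x := by
  have hx0 : (x : ℂ) ≠ 0 := by exact_mod_cast hx.ne'
  have hl := (Real.hasDerivAt_log hx.ne').ofReal_comp
  have hi := (hasDerivAt_id x).ofReal_comp
  have := ((((hi.pow 2).const_mul a).add (((hi.pow 2).const_mul b).mul hl)).add_const c).add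
    (hl.const_mul d)
  convert! this using 1
  simp [Uf]
  field_simp

theorem hasDeriv_U (a b d : ℂ) {x : ℝ} (hx : 0 < x) :
    HasDerivAt (Uf a b d) (Vf a b d x) x := by
  have hx0 : (x : ℂ) ≠ 0 := by exact_mod_cast hx.ne'
  have hl := (Real.hasDerivAt_log hx.ne').ofReal_comp
  have hi := (hasDerivAt_id x).ofReal_comp
  have := ((hi.const_mul (2 * a)).add ((((hi.const_mul 2).mul hl).add hi).const_mul b)).add
    ((hi.inv (by simpa using hx0)).const_mul d)
  convert! this using 1
  simp [Vf]
  field_simp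
  ring

theorem hasDeriv_xV (a b d : ℂ) {x : ℝ} (hx : 0 < x) :
    HasDerivAt (fun x : ℝ => (x : ℂ) * Vf a b d x) (Xf a b d x) x := by
  have hx0 : (x : ℂ) ≠ 0 := by exact_mod_cast hx.ne'
  have hl := (Real.hasDerivAt_log hx.ne').ofReal_comp
  have hi := (hasDerivAt_id x).ofReal_comp
  have := hi.mul (((((hl.const_mul 2).add_const 3).const_mul b).const_add (2 * a)).sub
    (((hi.pow 2).inv (by simpa using hx0)).const_mul d))
  convert! this using 1
  simp [Xf]
  field_simp
  ring

theorem contX (a b d : ℂ) : ContinuousOn (Xf a b d) (Ioi 0) := by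
  have hl : ContinuousOn (fun x : ℝ => (Real.log x : ℂ)) (Ioi 0) := fun x hx =>
    (Real.hasDerivAt_log (ne_of_gt hx)).ofReal_comp.continuousAt.continuousWithinAt
  unfold Xf
  refine ContinuousOn.add (by fun_prop) (ContinuousOn.div (by fun_prop) (by fun_prop) ?_)
  intro x hx
  have : (x : ℂ) ≠ 0 := by exact_mod_cast (ne_of_gt hx)
  exact pow_ne_zero _ this

theorem contV (a b d : ℂ) : ContinuousOn (Vf a b d) (Ioi 0) := by
  have hl : ContinuousOn (fun x : ℝ => (Real.log x : ℂ)) (Ioi 0) := fun x hx =>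
    (Real.hasDerivAt_log (ne_of_gt hx)).ofReal_comp.continuousAt.continuousWithinAt
  unfold Vf
  refine ContinuousOn.sub (by fun_prop) (ContinuousOn.div (by fun_prop) (by fun_prop) ?_)
  intro x hx
  have : (x : ℂ) ≠ 0 := by exact_mod_cast (ne_of_gt hx)
  exact pow_ne_zero _ this

theorem contG {η : ℝ → ℂ} (h : ContDiffOn ℝ 2 η (Ioi 0)) :
    ContinuousOn (deriv (deriv η)) (Ioi 0) := by
  have h1 : ContDiffOn ℝ 1 (deriv η) (Ioi 0) :=
    ((contDiffOn_succ_iff_deriv_of_isOpen (n := 1) isOpen_Ioi).1 (by simpa [one_add_one_eq_two] using h)).2.2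
  have h2 : ContDiffOn ℝ 0 (deriv (deriv η)) (Ioi 0) :=
    ((contDiffOn_succ_iff_deriv_of_isOpen (n := 0) isOpen_Ioi).1 (by simpa using h1)).2.2
  exact h2.continuousOn

theorem piece_deriv (E : Lambda0) {p q : ℝ} (hp : 0 ≤ p) {a b c d : ℂ}
    (h : ∀ x ∈ Ioo p q, E.f x = a * (x : ℂ) ^ 2 + b * (x : ℂ) ^ 2 * (Real.log x : ℂ) + c
      + d * (Real.log x : ℂ)) :
    ∀ x ∈ Ioo p q, E.f' x = Uf a b d x ∧ deriv (deriv E.f) x = Vf a b d x := by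
  have h1 : ∀ x ∈ Ioo p q, HasDerivAt E.f (Uf a b d x) x := by
    intro x hx
    refine (hasDeriv_eta a b c d (hp.trans_lt hx.1)).congr_of_eventuallyEq ?_
    filter_upwards [Ioo_mem_nhds hx.1 hx.2] with y hy using h y hy
  intro x hx
  have hx0 := hp.trans_lt hx.1
  refine ⟨(E.hasDeriv x hx0).unique (h1 x hx), ?_⟩
  have : deriv E.f =ᶠ[nhds x] Uf a b d := by
    filter_upwards [Ioo_mem_nhds hx.1 hx.2] with y hy using (h1 y hy).deriv
  rw [this.deriv_eq]
  exact (hasDeriv_U a b d hx0).deriv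

def Wf (E P : Lambda0) (x : ℝ) : ℂ :=
  x * deriv (deriv E.f) x * (starRingEnd ℂ) (P.f' x)

def If (F G : Lambda0) (r : ℝ) : ℂ :=
    ((r : ℂ) * F.f'' r * (starRingEnd ℂ) (G.f'' r) +
      (1 / (r : ℂ)) * F.f' r * (starRingEnd ℂ) (G.f' r))

theorem conj_int {G : ℝ → ℂ} {p q : ℝ} (hG : IntervalIntegrable G volume p q) :
    IntervalIntegrable (fun x => (starRingEnd ℂ) (G x)) volume p q := by
  refine ⟨?_, ?_⟩
  · exact (LinearIsometryEquiv.integrable_comp_iff Complex.conjLIE).2 hG.1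
  · exact (LinearIsometryEquiv.integrable_comp_iff Complex.conjLIE).2 hG.2

theorem piece (E P : Lambda0) (hs : ContDiffOn ℝ 2 E.f (Ioi 0)) {p q : ℝ} (hp : 0 < p)
    (hpq : p < q) {a b c d : ℂ}
    (h : ∀ x ∈ Ioo p q, E.f x = a * (x : ℂ) ^ 2 + b * (x : ℂ) ^ 2 * (Real.log x : ℂ) + c
      + d * (Real.log x : ℂ)) :
    ∫ x in p..q, If E P x = Wf E P q - Wf E P p
      - 4 * b * ((starRingEnd ℂ) (P.f q) - (starRingEnd ℂ) (P.f p)) := by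
  have hd := piece_deriv E hp.le h
  have hsub : Icc p q ⊆ Ioi 0 := fun x hx => hp.trans_le hx.1
  have hV : EqOn (deriv (deriv E.f)) (Vf a b d) (Icc p q) := by
    refine EqOn.of_subset_closure (s := Ioo p q) (fun x hx => (hd x hx).2)
      ((contG hs).mono hsub) ((contV a b d).mono hsub) Ioo_subset_Icc_self ?_
    rw [closure_Ioo hpq.ne]
  obtain ⟨iE, fE⟩ := E.locAC p q hp hpq.le
  obtain ⟨iP, fP⟩ := P.locAC p q hp hpq.le
  have iE' : IntervalIntegrable E.f'' volume p q :=
    (intervalIntegrable_iff_integrableOn_Icc_of_le hpq.le).2 iE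
  have iP' : IntervalIntegrable P.f'' volume p q :=
    (intervalIntegrable_iff_integrableOn_Icc_of_le hpq.le).2 iP
  have cX : ContinuousOn (Xf a b d) (uIcc p q) := by
    rw [uIcc_of_le hpq.le]; exact (contX a b d).mono hsub
  obtain ⟨j1, j2⟩ := ibp (F := fun x : ℝ => (x : ℂ) * Vf a b d x) (F' := Xf a b d)
    (G := fun x => (starRingEnd ℂ) (P.f' x)) (G' := fun x => (starRingEnd ℂ) (P.f'' x)) hpq.le
    cX.intervalIntegrable (conj_int iP')
    (by
      intro x hx
      rw [intervalIntegral.integral_eq_sub_of_hasDerivAt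
        (f := fun x : ℝ => (x : ℂ) * Vf a b d x)]
      · ring
      · intro y hy
        rw [uIcc_of_le hx.1] at hy
        exact hasDeriv_xV a b d (hp.trans_le hy.1)
      · refine (cX.mono ?_).intervalIntegrable
        rw [uIcc_of_le hx.1, uIcc_of_le hpq.le]
        exact Icc_subset_Icc_right hx.2)
    (by
      intro x hx
      simp only [fP x hx, map_add]
      rw [intervalIntegral.integral_of_le hx.1, intervalIntegral.integral_of_le hx.1,
        integral_conj])
  have hcd : ContinuousOn (fun x => (starRingEnd ℂ) (P.f' x)) (uIcc p q) := by
    rw [uIcc_of_le hpq.le]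
    exact Complex.continuous_conj.comp_continuousOn (P.contDeriv.mono hsub)
  have hψ : ∫ x in p..q, (starRingEnd ℂ) (P.f' x)
      = (starRingEnd ℂ) (P.f q) - (starRingEnd ℂ) (P.f p) := by
    rw [intervalIntegral.integral_eq_sub_of_hasDerivAt
        (f := fun x : ℝ => (starRingEnd ℂ) (P.f x))]
    · intro y hy
      rw [uIcc_of_le hpq.le] at hy
      exact (Complex.conjCLE : ℂ →L[ℝ] ℂ).hasFDerivAt.comp_hasDerivAt y (P.hasDeriv y (hsub hy))
    · exact hcd.intervalIntegrable
  have hae : ∀ᵐ x, x ∈ uIoc p q → If E P x = (Xf a b d x * (starRingEnd ℂ) (P.f' x) +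
      (x : ℂ) * Vf a b d x * (starRingEnd ℂ) (P.f'' x))
      - 4 * b * (starRingEnd ℂ) (P.f' x) := by
    have hq : ∀ᵐ x : ℝ, x ≠ q := by simp [ae_iff, measure_singleton]
    filter_upwards [iE'.ae_hasDerivAt_integral, hq] with x h1 h2 hx
    rw [uIoc_of_le hpq.le] at hx
    have hx' : x ∈ Ioo p q := ⟨hx.1, lt_of_le_of_ne hx.2 h2⟩
    have e1 := (h1 (by rw [uIcc_of_le hpq.le]; exact Ioo_subset_Icc_self hx') p
      (by simp)).const_add (E.f' p)
    have hx0 : 0 < x := hp.trans hx'.1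
    have e2 : HasDerivAt (fun x => E.f' p + ∫ t in p..x, E.f'' t) (Vf a b d x) x := by
      refine (hasDeriv_U a b d hx0).congr_of_eventuallyEq ?_
      filter_upwards [Ioo_mem_nhds hx'.1 hx'.2] with y hy
      rw [← fE y (Ioo_subset_Icc_self hy), (hd y hy).1]
    have e3 := e1.unique e2
    have hx0' : (x : ℂ) ≠ 0 := by exact_mod_cast hx0.ne'
    unfold If
    rw [e3, (hd x hx').1]
    unfold Uf Xf
    field_simp
    ring
  rw [intervalIntegral.integral_congr_ae hae, intervalIntegral.integral_sub j1
    (hcd.intervalIntegrable.const_mul _), j2, intervalIntegral.integral_const_mul, hψ]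
  unfold Wf
  rw [hV ⟨hpq.le, le_rfl⟩, hV ⟨le_rfl, hpq.le⟩]

theorem deriv_bound (P : Lambda0) : ∃ C : ℝ, ∀ x : ℝ, 0 < x → ‖P.f' x‖ ≤ C + |Real.log x| := by
  set e : ℝ → ℝ := fun r : ℝ => r * ‖P.f'' r‖ ^ 2 + (1 / r) * ‖P.f' r‖ ^ 2 with he
  have he0 : ∀ r ∈ Ioi (0 : ℝ), 0 ≤ e r := by
    intro r hr
    have : 0 < r := hr
    simp only [he]
    positivity
  set K : ℝ := ∫ r in Ioi (0 : ℝ), e r with hK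
  have key : ∀ a b : ℝ, 0 < a → a ≤ b →
      ‖∫ t in a..b, P.f'' t‖ ≤ K + (Real.log b - Real.log a) := by
    intro a b ha hab
    have hsub : Ioc a b ⊆ Ioi 0 := fun x hx => ha.trans hx.1
    have i1 : IntervalIntegrable e volume a b :=
      (intervalIntegrable_iff_integrableOn_Ioc_of_le hab).2 (P.energyFin.mono_set hsub)
    have i2 : IntervalIntegrable (fun t : ℝ => t⁻¹) volume a b := by
      refine ContinuousOn.intervalIntegrable ?_
      rw [uIcc_of_le hab]
      exact continuousOn_id.inv₀ fun x hx => (ha.trans_le hx.1).ne'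
    have h1 : ‖∫ t in a..b, P.f'' t‖ ≤ ∫ t in a..b, (e t + t⁻¹) := by
      refine intervalIntegral.norm_integral_le_of_norm_le hab ?_ (i1.add i2)
      refine Eventually.of_forall fun t ht => ?_
      have ht0 : 0 < t := ha.trans ht.1
      have h2 : 0 ≤ (1 / t) * ‖P.f' t‖ ^ 2 := by positivity
      have h3 : t * ‖P.f'' t‖ ^ 2 + t⁻¹ - ‖P.f'' t‖ =
          t⁻¹ * ((t * ‖P.f'' t‖ - 1 / 2) ^ 2 + 3 / 4) := by
        field_simp
        ring
      have h4 : 0 ≤ t⁻¹ * ((t * ‖P.f'' t‖ - 1 / 2) ^ 2 + 3 / 4) := by positivity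
      simp only [he]
      linarith
    rw [intervalIntegral.integral_add i1 i2, integral_inv_of_pos ha (ha.trans_le hab),
      Real.log_div (ha.trans_le hab).ne' ha.ne',
      intervalIntegral.integral_of_le (f := e) hab] at h1
    have h5 : ∫ t in Ioc a b, e t ≤ K :=
      setIntegral_mono_set P.energyFin
        ((ae_restrict_iff' measurableSet_Ioi).2 (Eventually.of_forall he0))
        (LE.le.eventuallyLE hsub)
    linarith
  refine ⟨‖P.f' 1‖ + K, fun x hx => ?_⟩
  rcases le_total x 1 with h | h
  · have e1 := (P.locAC x 1 hx h).2 1 ⟨h, le_rfl⟩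
    have e2 := key x 1 hx h
    have e3 : P.f' x = P.f' 1 - ∫ t in x..1, P.f'' t := by rw [e1]; ring
    have e4 := norm_sub_le (P.f' 1) (∫ t in x..1, P.f'' t)
    rw [← e3] at e4
    have := neg_le_abs (Real.log x)
    rw [Real.log_one] at e2
    linarith
  · have e1 := (P.locAC 1 x one_pos h).2 x ⟨h, le_rfl⟩
    have e2 := key 1 x one_pos h
    have e4 := norm_add_le (P.f' 1) (∫ t in 1..x, P.f'' t)
    rw [← e1] at e4
    have := le_abs_self (Real.log x)
    rw [Real.log_one] at e2
    linarith

theorem sqrt_log : Tendsto (fun x : ℝ => √x * Real.log x) (nhdsWithin 0 (Ioi 0)) (nhds 0) := by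
  have := tendsto_log_mul_rpow_nhdsGT_zero (r := 1 / 2) (by norm_num)
  refine this.congr fun x => ?_
  rw [Real.sqrt_eq_rpow, mul_comm]

theorem sqrt_zero : Tendsto (fun x : ℝ => √x) (nhdsWithin 0 (Ioi 0)) (nhds 0) := by
  have := (Real.continuous_sqrt.tendsto 0).mono_left (nhdsWithin_le_nhds (s := Ioi (0 : ℝ)))
  simpa using this

theorem W_zero (E P : Lambda0) {q : ℝ} (hq : 0 < q) {a b : ℂ}
    (hd : ∀ x ∈ Ioo 0 q, deriv (deriv E.f) x = Vf a b 0 x) :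
    Tendsto (Wf E P) (nhdsWithin 0 (Ioi 0)) (nhds 0) := by
  obtain ⟨C, hC⟩ := deriv_bound P
  have h1 : Tendsto (fun x : ℝ => ((√x : ℝ) : ℂ) * Vf a b 0 x) (nhdsWithin 0 (Ioi 0)) (nhds 0) := by
    have s0 := (Complex.continuous_ofReal.tendsto 0).comp sqrt_zero
    have s1 := (Complex.continuous_ofReal.tendsto 0).comp sqrt_log
    have := (s0.mul_const (2 * a + 3 * b)).add (s1.mul_const (2 * b))
    simp only [Complex.ofReal_zero, zero_mul, add_zero] at this
    refine this.congr fun x => ?_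
    simp [Vf]
    ring
  have h2 : Tendsto (fun x : ℝ => ((√x : ℝ) : ℂ) * (starRingEnd ℂ) (P.f' x))
      (nhdsWithin 0 (Ioi 0)) (nhds 0) := by
    have := (sqrt_zero.mul_const C).add sqrt_log.abs
    simp only [zero_mul, abs_zero, add_zero] at this
    refine squeeze_zero_norm' ?_ this
    filter_upwards [self_mem_nhdsWithin] with x hx
    rw [norm_mul, Complex.norm_real, RCLike.norm_conj, Real.norm_eq_abs, abs_mul,
      abs_of_nonneg (Real.sqrt_nonneg x), ← mul_add]
    exact mul_le_mul_of_nonneg_left (hC x hx) (Real.sqrt_nonneg x)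
  have h3 := h1.mul h2
  rw [mul_zero] at h3
  refine h3.congr' ?_
  filter_upwards [Ioo_mem_nhdsGT hq] with x hx
  unfold Wf
  rw [hd x hx]
  have : ((√x : ℝ) : ℂ) * ((√x : ℝ) : ℂ) = x := by
    rw [← Complex.ofReal_mul, Real.mul_self_sqrt hx.1.le]
  linear_combination (Vf a b 0 x * (starRingEnd ℂ) (P.f' x)) * this

theorem W_top (E P : Lambda0) {p : ℝ} {d : ℂ}
    (hd : ∀ x ∈ Ioi p, deriv (deriv E.f) x = Vf 0 0 d x) :
    Tendsto (Wf E P) atTop (nhds 0) := by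
  obtain ⟨C, hC⟩ := deriv_bound P
  have l1 : Tendsto (fun x : ℝ => Real.log x * x⁻¹) atTop (nhds 0) := by
    simpa [div_eq_mul_inv] using Real.isLittleO_log_id_atTop.tendsto_div_nhds_zero
  have := ((tendsto_inv_atTop_zero (𝕜 := ℝ)).mul_const C).add l1.abs
  have := this.const_mul ‖d‖
  simp only [zero_mul, abs_zero, add_zero, mul_zero] at this
  refine squeeze_zero_norm' ?_ this
  filter_upwards [eventually_gt_atTop p, eventually_gt_atTop 0] with x hx hx0
  have hx0' : (x : ℂ) ≠ 0 := by exact_mod_cast hx0.ne'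
  have : Wf E P x = -d * (x : ℂ)⁻¹ * (starRingEnd ℂ) (P.f' x) := by
    unfold Wf
    rw [hd x hx]
    unfold Vf
    field_simp
    ring
  rw [this, norm_mul, norm_mul, norm_neg, norm_inv, Complex.norm_real, RCLike.norm_conj,
    Real.norm_of_nonneg hx0.le, mul_assoc, abs_mul, abs_of_pos (inv_pos.2 hx0)]
  refine mul_le_mul_of_nonneg_left ?_ (norm_nonneg d)
  rw [mul_comm |Real.log x|, ← mul_add]
  exact mul_le_mul_of_nonneg_left (hC x hx0) (inv_pos.2 hx0).le

/-- fundamental orthogonality. If `η ∈ S₀(ρ)` and `ψ ∈ Λ₀` vanishes at all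
knots, and either `lim_{r→0⁺} ψ(r) = 0` or `η` is non-singular, then `⟨η,ψ⟩₀ = 0`. -/
theorem stmt2 (n : ℕ) (r : ℕ → ℝ) (hn : 1 ≤ n) (hpos : 0 < r 1)
    (hmono : ∀ j, 1 ≤ j → j < n → r j < r (j + 1))
    (E P : Lambda0) (hE : IsBLSpline n r E.f)
    (hzero : ∀ j, 1 ≤ j → j ≤ n → P.f (r j) = 0)
    (hextra : Filter.Tendsto P.f (nhdsWithin 0 (Set.Ioi 0)) (nhds 0) ∨
      NonSingularBLS (r 1) E.f) :
    innerBL E P = 0 := by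
  by_cases hI : IntegrableOn (If E P) (Ioi 0)
  swap
  · exact integral_undef hI
  have hinn : innerBL E P = ∫ x in Ioi (0 : ℝ), If E P x := rfl
  have hs := hE.smooth
  have hposj : ∀ j, 1 ≤ j → j ≤ n → 0 < r j := by
    intro j hj
    induction j, hj using Nat.le_induction with
    | base => exact fun _ => hpos
    | succ j hj ih => exact fun h => (ih (by omega)).trans (hmono j hj (by omega))
  have hint : ∀ p q : ℝ, 0 ≤ p → 0 ≤ q → IntervalIntegrable (If E P) volume p q := by
    intro p q hp hq
    refine intervalIntegrable_iff.2 (hI.mono_set fun x hx => ?_)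
    exact lt_of_le_of_lt (le_min hp hq) hx.1
  have hmid : ∀ j, 1 ≤ j → j ≤ n →
      ∫ x in (r 1)..(r j), If E P x = Wf E P (r j) - Wf E P (r 1) := by
    intro j hj
    induction j, hj using Nat.le_induction with
    | base => intro _; simp
    | succ j hj ih =>
      intro h
      obtain ⟨a, b, c, d, hf⟩ := hE.pieces j hj h
      have hj0 := hposj j hj (by omega)
      have e1 := piece E P hs hj0 (hmono j hj (by omega)) hf
      rw [hzero j hj (by omega), hzero (j + 1) (by omega) h] at e1
      rw [← intervalIntegral.integral_add_adjacent_intervals (hint (r 1) (r j) hpos.le hj0.le)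
        (hint (r j) (r (j + 1)) hj0.le (hposj (j + 1) (by omega) h).le), ih (by omega), e1]
      simp
  have hleft : ∫ x in (0 : ℝ)..(r 1), If E P x = Wf E P (r 1) := by
    have hab : ∃ a b c : ℂ, (∀ x ∈ Ioo (0 : ℝ) (r 1), E.f x = a * (x : ℂ) ^ 2
          + b * (x : ℂ) ^ 2 * (Real.log x : ℂ) + c + 0 * (Real.log x : ℂ)) ∧
        (Tendsto P.f (nhdsWithin 0 (Ioi 0)) (nhds 0) ∨ b = 0) := by
      rcases hextra with h | ⟨a, c, h⟩
      · obtain ⟨a, b, c, hf⟩ := hE.left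
        exact ⟨a, b, c, fun x hx => by rw [hf x hx]; ring, Or.inl h⟩
      · exact ⟨a, 0, c, fun x hx => by rw [h x hx]; ring, Or.inr rfl⟩
    obtain ⟨a, b, c, hf, hb⟩ := hab
    have hW := W_zero E P hpos (fun x hx => (piece_deriv E le_rfl hf x hx).2)
    have hbψ : Tendsto (fun x => 4 * b * (starRingEnd ℂ) (P.f x)) (nhdsWithin 0 (Ioi 0))
        (nhds 0) := by
      rcases hb with h | h
      · have := ((Complex.continuous_conj.tendsto 0).comp h).const_mul (4 * b)
        simpa using this
      · simp [h]
    have t1 : Tendsto (fun x => ∫ t in x..(r 1), If E P t) (nhdsWithin 0 (Ioi 0))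
        (nhds (Wf E P (r 1))) := by
      have := (hW.const_sub (Wf E P (r 1))).add hbψ
      simp only [sub_zero, add_zero] at this
      refine this.congr' ?_
      filter_upwards [Ioo_mem_nhdsGT hpos] with x hx
      have e1 := piece E P hs hx.1 hx.2 (fun y hy => hf y ⟨hx.1.trans hy.1, hy.2⟩)
      rw [e1, hzero 1 le_rfl hn]
      simp
    have t2 : Tendsto (fun x => ∫ t in x..(r 1), If E P t) (nhdsWithin 0 (Ioi 0))
        (nhds (∫ t in (0 : ℝ)..(r 1), If E P t)) := by
      have hc := intervalIntegral.continuousOn_primitive_interval_left (a := 0) (b := r 1)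
        (f := If E P) (μ := volume)
        (by
          rw [uIcc_of_le hpos.le, integrableOn_Icc_iff_integrableOn_Ioc]
          exact hI.mono_set fun x hx => hx.1)
      have := (hc 0 (by simp)).tendsto
      refine this.mono_left ?_
      rw [uIcc_of_le hpos.le, ← nhdsWithin_Ioo_eq_nhdsGT hpos]
      exact nhdsWithin_mono _ Ioo_subset_Icc_self
    exact tendsto_nhds_unique t2 t1
  have hrn := hposj n hn le_rfl
  have hright : ∫ x in Ioi (r n), If E P x = - Wf E P (r n) := by
    obtain ⟨c, d, hf⟩ := hE.right
    have hf' : ∀ x ∈ Ioi (r n), E.f x = 0 * (x : ℂ) ^ 2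
          + 0 * (x : ℂ) ^ 2 * (Real.log x : ℂ) + c + d * (Real.log x : ℂ) :=
      fun x hx => by rw [hf x hx]; ring
    have hW := W_top E P (p := r n) (d := d) (fun x hx =>
      (piece_deriv E (p := r n) (q := x + 1) hrn.le (fun y hy => hf' y hy.1) x
        ⟨hx, by linarith⟩).2)
    have t1 := intervalIntegral_tendsto_integral_Ioi (r n)
      (hI.mono_set (Ioi_subset_Ioi hrn.le)) tendsto_id
    have t2 := hW.sub_const (Wf E P (r n))
    rw [zero_sub] at t2
    refine tendsto_nhds_unique t1 (t2.congr' ?_)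
    filter_upwards [eventually_gt_atTop (r n)] with x hx
    have e1 := piece E P hs hrn hx (fun y hy => hf' y hy.1)
    simp only [id]
    rw [e1]
    simp
  have hsplit := intervalIntegral.integral_interval_add_Ioi (a := (0 : ℝ)) (b := r n)
    (f := If E P) (μ := volume) hI (hI.mono_set (Ioi_subset_Ioi hrn.le))
  rw [hinn, ← hsplit, hright, ← intervalIntegral.integral_add_adjacent_intervals
    (hint 0 (r 1) le_rfl hpos.le) (hint (r 1) (r n) hpos.le hrn.le), hleft, hmid n hn le_rfl]
  ring
end
end

section
/- First integral relation: let σ ∈ S₀(ρ) and f ∈ Λ₀ satisfy f(r_j) = σ(r_j) for all j ∈ {1,…,n}, and suppose that either lim_{r→0⁺}(f(r) − σ(r)) = 0 or σ is non-singular. Then ‖f‖₀² = ‖σ‖₀² + ‖f − σ‖₀². -/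
open MeasureTheory Set Filter

noncomputable section

theorem ibp_real {u v : ℝ} (huv : u ≤ v) (k k' p q : ℝ → ℝ)
    (hk : ∀ x ∈ Icc u v, HasDerivAt k (k' x) x) (hk' : ContinuousOn k' (Icc u v))
    (hq : IntegrableOn q (Icc u v)) (hp : ∀ x ∈ Icc u v, p x = p u + ∫ t in u..x, q t) :
    ∫ x in u..v, (k' x * p x + k x * q x) = k v * p v - k u * p u := by
  have hqi : IntervalIntegrable q volume u v := by
    rw [intervalIntegrable_iff_integrableOn_Icc_of_le huv]; exact hq
  set P : ℝ → ℝ := fun x => ∫ t in u..x, q t with hP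
  have hPac : AbsolutelyContinuousOnInterval P u v :=
    hqi.absolutelyContinuousOnInterval_intervalIntegral (by simp)
  have hkac : AbsolutelyContinuousOnInterval k u v := by
    obtain ⟨C, hC⟩ := isCompact_Icc.exists_bound_of_continuousOn hk'
    have : LipschitzOnWith (Real.toNNReal C) k (uIcc u v) := by
      rw [uIcc_of_le huv]
      apply (convex_Icc u v).lipschitzOnWith_of_nnnorm_hasDerivWithin_le
        (f' := k') (fun x hx => (hk x hx).hasDerivWithinAt)
      intro x hx
      rw [← NNReal.coe_le_coe, coe_nnnorm]
      exact (hC x hx).trans (Real.le_coe_toNNReal C)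
    exact this.absolutelyContinuousOnInterval
  have h1 := hkac.integral_deriv_mul_eq_sub hPac
  have hkd : IntervalIntegrable k' volume u v := by
    apply ContinuousOn.intervalIntegrable; rwa [uIcc_of_le huv]
  have hkc : ContinuousOn k (uIcc u v) := by
    rw [uIcc_of_le huv]; exact fun x hx => (hk x hx).continuousAt.continuousWithinAt
  have h2 : ∫ x in u..v, k' x = k v - k u :=
    intervalIntegral.integral_eq_sub_of_hasDerivAt (by rw [uIcc_of_le huv]; exact hk) hkd
  have h3 : ∫ x in u..v, (k' x * p x + k x * q x) =
      ∫ x in u..v, ((k' x * p u) + (deriv k x * P x + k x * deriv P x)) := by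
    apply intervalIntegral.integral_congr_ae
    filter_upwards [hqi.ae_hasDerivAt_integral] with x hx hxm
    have hxm' : x ∈ uIcc u v := uIoc_subset_uIcc hxm
    have hx1 : x ∈ Icc u v := by rwa [uIcc_of_le huv] at hxm'
    have e1 : deriv P x = q x := (hx hxm' u (by simp)).deriv
    rw [e1, (hk x hx1).deriv, hp x hx1]
    ring
  have h4 : IntervalIntegrable (fun x => deriv k x * P x + k x * deriv P x) volume u v :=
    (hkac.intervalIntegrable_deriv.mul_continuousOn hPac.continuousOn).add
      (hPac.intervalIntegrable_deriv.continuousOn_mul hkac.continuousOn)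
  rw [h3, intervalIntegral.integral_add (hkd.mul_const _) h4, h1,
    intervalIntegral.integral_mul_const, h2, hp v ⟨huv, le_rfl⟩]
  have : P u = 0 := by simp [hP]
  rw [this]; ring

theorem formula_derivs {u v a b c d : ℝ} (hu : 0 < u) (huv : u < v) (s0 s1 s2 : ℝ → ℝ)
    (h1 : ∀ x, 0 < x → HasDerivAt s0 (s1 x) x) (h2 : ∀ x, 0 < x → HasDerivAt s1 (s2 x) x)
    (hc : ContinuousOn s2 (Ioi 0))
    (hf : ∀ x ∈ Ioo u v, s0 x = a * x ^ 2 + b * x ^ 2 * Real.log x + c + d * Real.log x) :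
    (∀ x ∈ Icc u v, s1 x = 2 * a * x + 2 * b * x * Real.log x + b * x + d / x) ∧
    (∀ x ∈ Icc u v, s2 x = 2 * a + 2 * b * Real.log x + 3 * b - d / x ^ 2) := by
  have hsub : Icc u v ⊆ Ioi 0 := fun x hx => lt_of_lt_of_le hu hx.1
  have hsub' : Ioo u v ⊆ Ioi 0 := Ioo_subset_Icc_self.trans hsub
  have hlog : ContinuousOn Real.log (Icc u v) :=
    Real.continuousOn_log.mono fun x hx => ne_of_gt (hsub hx)
  have i1 : ∀ x ∈ Ioo u v, s1 x = 2 * a * x + 2 * b * x * Real.log x + b * x + d / x := by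
    intro x hx
    have hx0 : 0 < x := hsub' hx
    have e : s0 =ᶠ[nhds x] fun x => a * x ^ 2 + b * x ^ 2 * Real.log x + c + d * Real.log x := by
      filter_upwards [Ioo_mem_nhds hx.1 hx.2] with y hy using hf y hy
    have hd := (h1 x hx0).congr_of_eventuallyEq e.symm
    have hl := Real.hasDerivAt_log hx0.ne'
    have hp := hasDerivAt_pow 2 x
    have := ((((hp.const_mul a).add ((hp.const_mul b).mul hl)).add_const c).add (hl.const_mul d))
    rw [hd.unique this]
    field_simp
    norm_num
    ring
  have i2 : ∀ x ∈ Ioo u v, s2 x = 2 * a + 2 * b * Real.log x + 3 * b - d / x ^ 2 := by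
    intro x hx
    have hx0 : 0 < x := hsub' hx
    have e : s1 =ᶠ[nhds x] fun x => 2 * a * x + 2 * b * x * Real.log x + b * x + d * x⁻¹ := by
      filter_upwards [Ioo_mem_nhds hx.1 hx.2] with y hy using by rw [i1 y hy]; rfl
    have hd := (h2 x hx0).congr_of_eventuallyEq e.symm
    have hl := Real.hasDerivAt_log hx0.ne'
    have hp := hasDerivAt_id x
    have := ((((hp.const_mul (2*a)).add ((hp.const_mul (2*b)).mul hl)).add (hp.const_mul b)).add
      ((hasDerivAt_inv hx0.ne').const_mul d))
    rw [hd.unique this]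
    try simp only [id]
    field_simp
    ring
  have hcl : Icc u v ⊆ closure (Ioo u v) := by rw [closure_Ioo huv.ne]
  constructor
  · apply Set.EqOn.of_subset_closure i1 _ _ Ioo_subset_Icc_self hcl
    · exact fun x hx => (h2 x (hsub hx)).continuousAt.continuousWithinAt
    · have : ContinuousOn (fun x : ℝ => d / x) (Icc u v) :=
        continuousOn_const.div continuousOn_id fun x hx => ne_of_gt (hsub hx)
      fun_prop
  · apply Set.EqOn.of_subset_closure i2 (hc.mono hsub) _ Ioo_subset_Icc_self hcl
    have : ContinuousOn (fun x : ℝ => d / x ^ 2) (Icc u v) :=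
      continuousOn_const.div (by fun_prop) fun x hx => pow_ne_zero _ (ne_of_gt (hsub hx))
    fun_prop

theorem piece_real {u v a b c d : ℝ} (hu : 0 < u) (huv : u < v) (s0 s1 s2 g0 g1 g2 : ℝ → ℝ)
    (h1 : ∀ x, 0 < x → HasDerivAt s0 (s1 x) x) (h2 : ∀ x, 0 < x → HasDerivAt s1 (s2 x) x)
    (hc : ContinuousOn s2 (Ioi 0))
    (hg : ∀ x, 0 < x → HasDerivAt g0 (g1 x) x) (hgc : ContinuousOn g1 (Ioi 0))
    (hq : ∀ a b, 0 < a → a ≤ b → IntegrableOn g2 (Icc a b))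
    (hp : ∀ a b, 0 < a → a ≤ b → g1 b = g1 a + ∫ t in a..b, g2 t)
    (hf : ∀ x ∈ Ioo u v, s0 x = a * x ^ 2 + b * x ^ 2 * Real.log x + c + d * Real.log x) :
    ∫ x in u..v, (x * (g2 x * s2 x) + 1 / x * (g1 x * s1 x)) =
      (v * s2 v * g1 v - 4 * b * g0 v) - (u * s2 u * g1 u - 4 * b * g0 u) := by
  obtain ⟨e1, e2⟩ := formula_derivs hu huv s0 s1 s2 h1 h2 hc hf
  have hsub : Icc u v ⊆ Ioi 0 := fun x hx => lt_of_lt_of_le hu hx.1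
  set k : ℝ → ℝ := fun x => x * (2 * a + 2 * b * Real.log x + 3 * b) - d * x⁻¹ with hk
  set k' : ℝ → ℝ := fun x => 2 * a + 2 * b * Real.log x + 5 * b + d * (x ^ 2)⁻¹ with hk'
  have hkd : ∀ x ∈ Icc u v, HasDerivAt k (k' x) x := by
    intro x hx
    have hx0 : 0 < x := hsub hx
    have hl := Real.hasDerivAt_log hx0.ne'
    have := ((hasDerivAt_id x).mul (((hl.const_mul (2*b)).const_add (2*a)).add_const (3*b))).sub
      ((hasDerivAt_inv hx0.ne').const_mul d)
    refine this.congr_deriv ?_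
    simp only [hk', id]
    field_simp
    ring
  have hk'c : ContinuousOn k' (Icc u v) := by
    have hlog : ContinuousOn Real.log (Icc u v) :=
      Real.continuousOn_log.mono fun x hx => ne_of_gt (hsub hx)
    have : ContinuousOn (fun x : ℝ => (x ^ 2)⁻¹) (Icc u v) :=
      ContinuousOn.inv₀ (by fun_prop) fun x hx => pow_ne_zero _ (ne_of_gt (hsub hx))
    fun_prop
  have key := ibp_real huv.le k k' g1 g2 hkd hk'c (hq u v hu huv.le)
    (fun x hx => hp u x hu hx.1)
  have hg1i : IntervalIntegrable g1 volume u v := by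
    apply ContinuousOn.intervalIntegrable; rw [uIcc_of_le huv.le]; exact hgc.mono hsub
  have h0 : ∫ x in u..v, g1 x = g0 v - g0 u := by
    apply intervalIntegral.integral_eq_sub_of_hasDerivAt _ hg1i
    rw [uIcc_of_le huv.le]; exact fun x hx => hg x (hsub hx)
  have hkc : ContinuousOn k (uIcc u v) := by
    rw [uIcc_of_le huv.le]; exact fun x hx => (hkd x hx).continuousAt.continuousWithinAt
  have hg2i : IntervalIntegrable g2 volume u v := by
    rw [intervalIntegrable_iff_integrableOn_Icc_of_le huv.le]; exact hq u v hu huv.le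
  have hint : IntervalIntegrable (fun x => k' x * g1 x + k x * g2 x) volume u v := by
    refine (IntervalIntegrable.continuousOn_mul hg1i ?_).add (hg2i.continuousOn_mul hkc)
    rwa [uIcc_of_le huv.le]
  have hks : ∀ x ∈ Icc u v, k x = x * s2 x := by
    intro x hx
    have hx0 : 0 < x := hsub hx
    rw [e2 x hx]; simp only [hk]; field_simp
  have : ∫ x in u..v, (x * (g2 x * s2 x) + 1 / x * (g1 x * s1 x)) =
      ∫ x in u..v, ((k' x * g1 x + k x * g2 x) - 4 * b * g1 x) := by
    apply intervalIntegral.integral_congr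
    rw [uIcc_of_le huv.le]
    intro x hx
    have hx0 : 0 < x := hsub hx
    simp only
    rw [hks x hx, e1 x hx]
    simp only [hk']
    field_simp
    ring
  rw [this, intervalIntegral.integral_sub hint (hg1i.const_mul _), key,
    intervalIntegral.integral_const_mul, h0, hks u ⟨le_rfl, huv.le⟩, hks v ⟨huv.le, le_rfl⟩]
  ring

theorem freq_zero (g1 : ℝ → ℝ) (hi : IntegrableOn (fun x => 1 / x * g1 x ^ 2) (Ioi 0)) :
    ∃ᶠ x in nhdsWithin 0 (Ioi 0), |g1 x| < 1 := by
  intro h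
  obtain ⟨δ, hδ, hd⟩ := mem_nhdsGT_iff_exists_Ioo_subset.1 h
  have hδ0 : (0:ℝ) < δ := hδ
  have : IntegrableOn (fun x : ℝ => x⁻¹) (Ioo 0 δ) := by
    refine (hi.mono_set (fun x hx => hx.1)).mono' (by fun_prop) ?_
    refine (ae_restrict_iff' measurableSet_Ioo).2 (Eventually.of_forall fun x hx => ?_)
    have h1 : 1 ≤ |g1 x| := by simpa using hd hx
    have h2 : 1 ≤ g1 x ^ 2 := by rw [← sq_abs]; nlinarith
    have hx0 : 0 < x⁻¹ := inv_pos.2 hx.1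
    rw [Real.norm_of_nonneg hx0.le, one_div]
    nlinarith
  rw [← integrableOn_Ioc_iff_integrableOn_Ioo, ← intervalIntegrable_iff_integrableOn_Ioc_of_le hδ0.le,
    intervalIntegrable_inv_iff] at this
  rcases this with h | h
  · exact hδ0.ne h
  · exact h (by simp)

theorem freq_top (g1 : ℝ → ℝ) (hi : IntegrableOn (fun x => 1 / x * g1 x ^ 2) (Ioi 0)) :
    ∃ᶠ x in atTop, |g1 x| < 1 := by
  intro h
  obtain ⟨M, hM⟩ := eventually_atTop.1 h
  have : IntegrableOn (fun x : ℝ => x⁻¹) (Ioi (max M 0)) := by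
    refine (hi.mono_set (Ioi_subset_Ioi (le_max_right M 0))).mono' (by fun_prop) ?_
    refine (ae_restrict_iff' measurableSet_Ioi).2 (Eventually.of_forall fun x hx => ?_)
    have h1 : 1 ≤ |g1 x| := by simpa using hM x ((le_max_left _ _).trans (le_of_lt hx))
    have h2 : 1 ≤ g1 x ^ 2 := by rw [← sq_abs]; nlinarith
    have hx0 : 0 < x⁻¹ := inv_pos.2 (lt_of_le_of_lt (le_max_right _ _) hx)
    rw [Real.norm_of_nonneg hx0.le, one_div]
    nlinarith
  exact not_integrableOn_Ioi_inv this

/-- If `k g + e → L`, `k → 0`, `e → 0` and `|g| < 1` frequently, then `L = 0`. -/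
theorem lim_zero {l : Filter ℝ} (k g e : ℝ → ℝ) (L : ℝ)
    (hL : Tendsto (fun x => k x * g x + e x) l (nhds L)) (hk : Tendsto k l (nhds 0))
    (he : Tendsto e l (nhds 0)) (hg : ∃ᶠ x in l, |g x| < 1) : L = 0 := by
  have h1 : Tendsto (fun x => |k x * g x + e x| - (|k x| + |e x|)) l (nhds (|L| - (|0| + |0|))) :=
    hL.abs.sub (hk.abs.add he.abs)
  simp only [abs_zero, add_zero, sub_zero] at h1
  by_contra hne
  have h2 := h1.eventually (lt_mem_nhds (abs_pos.2 hne))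
  obtain ⟨x, hx, hx2⟩ := (hg.and_eventually h2).exists
  have := abs_add_le (k x * g x) (e x)
  rw [abs_mul] at this
  nlinarith [abs_nonneg (k x)]

theorem core_real (n : ℕ) (r : ℕ → ℝ) (hn : 1 ≤ n) (hpos : 0 < r 1)
    (hmono : ∀ j, 1 ≤ j → j < n → r j < r (j + 1)) (s0 s1 s2 g0 g1 g2 : ℝ → ℝ)
    (h1 : ∀ x, 0 < x → HasDerivAt s0 (s1 x) x) (h2 : ∀ x, 0 < x → HasDerivAt s1 (s2 x) x)
    (hc : ContinuousOn s2 (Ioi 0))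
    (hg : ∀ x, 0 < x → HasDerivAt g0 (g1 x) x) (hgc : ContinuousOn g1 (Ioi 0))
    (hq : ∀ a b, 0 < a → a ≤ b → IntegrableOn g2 (Icc a b))
    (hp : ∀ a b, 0 < a → a ≤ b → g1 b = g1 a + ∫ t in a..b, g2 t)
    (hE : IntegrableOn (fun x => 1 / x * g1 x ^ 2) (Ioi 0))
    (hI : IntegrableOn (fun x => x * (g2 x * s2 x) + 1 / x * (g1 x * s1 x)) (Ioi 0))
    (hz : ∀ j, 1 ≤ j → j ≤ n → g0 (r j) = 0)
    (pieces : ∀ j : ℕ, 1 ≤ j → j + 1 ≤ n → ∃ a b c d : ℝ, ∀ x ∈ Ioo (r j) (r (j + 1)),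
      s0 x = a * x ^ 2 + b * x ^ 2 * Real.log x + c + d * Real.log x)
    (left : ∃ a b c : ℝ, Tendsto (fun x => b * g0 x) (nhdsWithin 0 (Ioi 0)) (nhds 0) ∧
      ∀ x ∈ Ioo (0 : ℝ) (r 1), s0 x = a * x ^ 2 + b * x ^ 2 * Real.log x + c)
    (right : ∃ c d : ℝ, ∀ x ∈ Ioi (r n), s0 x = c + d * Real.log x) :
    ∫ x in Ioi (0:ℝ), (x * (g2 x * s2 x) + 1 / x * (g1 x * s1 x)) = 0 := by
  set I : ℝ → ℝ := fun x => x * (g2 x * s2 x) + 1 / x * (g1 x * s1 x) with hIdef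
  have hIint : ∀ u v, 0 ≤ u → u ≤ v → IntervalIntegrable I volume u v := by
    intro u v hu huv
    rw [intervalIntegrable_iff_integrableOn_Ioc_of_le huv]
    exact hI.mono_set fun x hx => lt_of_le_of_lt hu hx.1
  -- the middle part
  have mid : ∀ j, 1 ≤ j → j ≤ n → r 1 ≤ r j ∧
      ∫ x in (r 1)..(r j), I x = r j * s2 (r j) * g1 (r j) - r 1 * s2 (r 1) * g1 (r 1) := by
    intro j hj
    induction j, hj using Nat.le_induction with
    | base => intro _; simp
    | succ j hj ih =>
      intro hjn
      obtain ⟨ih1, ih2⟩ := ih (by omega)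
      have hlt := hmono j hj (by omega)
      refine ⟨ih1.trans hlt.le, ?_⟩
      obtain ⟨a, b, c, d, hf⟩ := pieces j hj hjn
      have := piece_real (lt_of_lt_of_le hpos ih1) hlt s0 s1 s2 g0 g1 g2 h1 h2 hc hg hgc hq hp hf
      rw [hz j hj (by omega), hz (j+1) (by omega) hjn] at this
      rw [← intervalIntegral.integral_add_adjacent_intervals (hIint _ _ hpos.le ih1)
        (hIint _ _ (hpos.le.trans ih1) hlt.le), ih2, this]
      ring
  obtain ⟨h1n, midn⟩ := mid n hn le_rfl
  have hrn : 0 < r n := lt_of_lt_of_le hpos h1n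
  -- the right part
  have R : ∫ x in Ioi (r n), I x = - (r n * s2 (r n) * g1 (r n)) := by
    obtain ⟨c, d, hf⟩ := right
    have hf' : ∀ v, ∀ x ∈ Ioo (r n) v,
        s0 x = 0 * x ^ 2 + 0 * x ^ 2 * Real.log x + c + d * Real.log x := by
      intro v x hx; rw [hf x hx.1]; ring
    have ht := intervalIntegral_tendsto_integral_Ioi (r n)
      (hI.mono_set (Ioi_subset_Ioi hrn.le)) (tendsto_id (α := ℝ) (x := atTop))
    have ht2 : Tendsto (fun x => (x * s2 x) * g1 x + 0) atTop
        (nhds ((∫ x in Ioi (r n), I x) + r n * s2 (r n) * g1 (r n))) := by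
      refine (ht.add_const (r n * s2 (r n) * g1 (r n))).congr' ?_
      filter_upwards [eventually_gt_atTop (r n)] with v hv
      have := piece_real hrn hv s0 s1 s2 g0 g1 g2 h1 h2 hc hg hgc hq hp (hf' v)
      simp only [id]
      rw [this]; ring
    have hk : Tendsto (fun x => x * s2 x) atTop (nhds 0) := by
      have : Tendsto (fun x : ℝ => -d * x⁻¹) atTop (nhds (-d * 0)) :=
        tendsto_inv_atTop_zero.const_mul _
      rw [mul_zero] at this
      refine this.congr' ?_
      filter_upwards [eventually_gt_atTop (r n)] with v hv
      have hv0 : 0 < v := hrn.trans hv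
      rw [(formula_derivs hrn hv s0 s1 s2 h1 h2 hc (hf' v)).2 v ⟨hv.le, le_rfl⟩]
      field_simp
      ring
    have := lim_zero _ g1 (fun _ => 0) _ ht2 hk tendsto_const_nhds (freq_top g1 hE)
    linarith
  -- the left part
  have Lf : ∫ x in (0:ℝ)..(r 1), I x = r 1 * s2 (r 1) * g1 (r 1) := by
    obtain ⟨a, b, c, hb, hf⟩ := left
    have hf' : ∀ u, 0 < u → ∀ x ∈ Ioo u (r 1),
        s0 x = a * x ^ 2 + b * x ^ 2 * Real.log x + c + 0 * Real.log x := by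
      intro u hu x hx; rw [hf x ⟨hu.trans hx.1, hx.2⟩]; ring
    have hIu : IntegrableOn I (uIcc 0 (r 1)) := by
      rw [uIcc_of_le hpos.le, integrableOn_Icc_iff_integrableOn_Ioc]
      exact hI.mono_set fun x hx => hx.1
    have hmem : Ioo 0 (r 1) ∈ nhdsWithin (0:ℝ) (Ioi 0) := Ioo_mem_nhdsGT hpos
    have ht : Tendsto (fun x => ∫ t in x..(r 1), I t) (nhdsWithin 0 (Ioi 0))
        (nhds (∫ x in (0:ℝ)..(r 1), I x)) := by
      have := intervalIntegral.continuousOn_primitive_interval_left hIu 0 (by simp)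
      refine this.tendsto.mono_left ?_
      rw [uIcc_of_le hpos.le]
      exact nhdsWithin_le_iff.2 (mem_of_superset hmem Ioo_subset_Icc_self)
    have ht2 : Tendsto (fun x => (x * s2 x) * g1 x + -4 * (b * g0 x)) (nhdsWithin 0 (Ioi 0))
        (nhds (r 1 * s2 (r 1) * g1 (r 1) - ∫ x in (0:ℝ)..(r 1), I x)) := by
      refine (ht.const_sub (r 1 * s2 (r 1) * g1 (r 1))).congr' ?_
      filter_upwards [hmem] with u hu
      have := piece_real hu.1 hu.2 s0 s1 s2 g0 g1 g2 h1 h2 hc hg hgc hq hp (hf' u hu.1)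
      rw [this, hz 1 le_rfl hn]; ring
    have hk : Tendsto (fun x => x * s2 x) (nhdsWithin 0 (Ioi 0)) (nhds 0) := by
      have h0 : Continuous fun x : ℝ => (2 * a + 3 * b) * x + 2 * b * (x * Real.log x) :=
        (by fun_prop : Continuous fun x : ℝ => (2 * a + 3 * b) * x).add
          (Real.continuous_mul_log.const_mul _)
      have := (h0.tendsto 0).mono_left (nhdsWithin_le_nhds (s := Ioi 0))
      simp only [mul_zero, zero_mul, add_zero] at this
      refine this.congr' ?_
      filter_upwards [hmem] with u hu
      rw [(formula_derivs hu.1 hu.2 s0 s1 s2 h1 h2 hc (hf' u hu.1)).2 u ⟨le_rfl, hu.2.le⟩]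
      ring
    have he : Tendsto (fun x => -4 * (b * g0 x)) (nhdsWithin 0 (Ioi 0)) (nhds 0) := by
      simpa using hb.const_mul (-4)
    have := lim_zero _ g1 _ _ ht2 hk he (freq_zero g1 hE)
    linarith
  rw [← intervalIntegral.integral_interval_add_Ioi (b := r n) hI (hI.mono_set (Ioi_subset_Ioi hrn.le)),
    ← intervalIntegral.integral_add_adjacent_intervals (hIint _ _ le_rfl hpos.le)
      (hIint _ _ hpos.le h1n), Lf, midn, R]
  ring

theorem Lambda0.meas2 (F : Lambda0) : AEStronglyMeasurable F.f'' (volume.restrict (Ioi 0)) := by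
  have : LocallyIntegrableOn F.f'' (Ioi 0) := by
    intro x hx
    have hx0 : (0:ℝ) < x := hx
    refine ⟨Icc (x/2) (2*x), mem_nhdsWithin_of_mem_nhds (Icc_mem_nhds (by linarith) (by linarith)),
      (F.locAC (x/2) (2*x) (by linarith) (by linarith)).1⟩
  exact this.aestronglyMeasurable

theorem Lambda0.meas1 (F : Lambda0) : AEStronglyMeasurable F.f' (volume.restrict (Ioi 0)) :=
  F.contDeriv.aestronglyMeasurable measurableSet_Ioi

theorem Lambda0.ae_deriv (F : Lambda0) :
    ∀ᵐ x ∂(volume.restrict (Ioi (0:ℝ))), F.f'' x = deriv F.f' x := by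
  have h : ∀ k : ℕ, ∀ᵐ x : ℝ, x ∈ Ioo (1 / ((k:ℝ) + 1)) ((k:ℝ) + 1) → F.f'' x = deriv F.f' x := by
    intro k
    have hk : (0:ℝ) < (k:ℝ) + 1 := by positivity
    have ha : (0:ℝ) < 1 / ((k:ℝ) + 1) := by positivity
    have hle : 1 / ((k:ℝ) + 1) ≤ (k:ℝ) + 1 := by
      rw [div_le_iff₀ hk]; nlinarith [Nat.cast_nonneg (α := ℝ) k]
    obtain ⟨h1, h2⟩ := F.locAC _ _ ha hle
    have hi : IntervalIntegrable F.f'' volume (1 / ((k:ℝ) + 1)) ((k:ℝ) + 1) := by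
      rwa [intervalIntegrable_iff_integrableOn_Icc_of_le hle]
    filter_upwards [hi.ae_hasDerivAt_integral] with x hx hxm
    have hd := hx (by rw [uIcc_of_le hle]; exact Ioo_subset_Icc_self hxm) (1 / ((k:ℝ) + 1)) (by simp)
    have hd2 := hd.const_add (F.f' (1 / ((k:ℝ) + 1)))
    refine (HasDerivAt.deriv (hd2.congr_of_eventuallyEq ?_)).symm
    filter_upwards [Ioo_mem_nhds hxm.1 hxm.2] with y hy using h2 y (Ioo_subset_Icc_self hy)
  rw [ae_restrict_iff' measurableSet_Ioi]
  filter_upwards [ae_all_iff.2 h] with x hx hx0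
  have hx0 : 0 < x := hx0
  obtain ⟨k, hk⟩ := exists_nat_gt (max x (1/x))
  refine hx k ⟨?_, ?_⟩
  · have := (le_max_right x (1/x)).trans_lt hk
    rw [div_lt_iff₀ hx0] at this
    rw [div_lt_iff₀ (by positivity)]
    nlinarith
  · have := (le_max_left x (1/x)).trans_lt hk
    linarith

theorem sq_norm_re_im (z : ℂ) : ‖z‖ ^ 2 = z.re ^ 2 + z.im ^ 2 := by
  rw [← Complex.normSq_eq_norm_sq, Complex.normSq_apply]; ring

theorem spline_deriv2 (S : Lambda0) (h : ContDiffOn ℝ 2 S.f (Ioi 0)) :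
    (∀ x, 0 < x → HasDerivAt S.f' (deriv S.f' x) x) ∧ ContinuousOn (deriv S.f') (Ioi 0) := by
  have h2 : ContDiffOn ℝ 1 (deriv S.f) (Ioi 0) :=
    ((contDiffOn_succ_iff_deriv_of_isOpen (n := 1) isOpen_Ioi).1 (by simpa [one_add_one_eq_two] using h)).2.2
  have h3 : ContDiffOn ℝ 1 S.f' (Ioi 0) := h2.congr fun x hx => (S.hasDeriv x hx).deriv.symm
  constructor
  · intro x hx
    exact ((h3.differentiableOn (by simp)).differentiableAt (isOpen_Ioi.mem_nhds hx)).hasDerivAt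
  · exact h3.continuousOn_deriv_of_isOpen isOpen_Ioi (by simp)

theorem hasDerivAt_re {f : ℝ → ℂ} {f' : ℂ} {x : ℝ} (h : HasDerivAt f f' x) :
    HasDerivAt (fun x => (f x).re) f'.re x :=
  Complex.reCLM.hasFDerivAt.comp_hasDerivAt x h

theorem hasDerivAt_im {f : ℝ → ℂ} {f' : ℂ} {x : ℝ} (h : HasDerivAt f f' x) :
    HasDerivAt (fun x => (f x).im) f'.im x :=
  Complex.imCLM.hasFDerivAt.comp_hasDerivAt x h

/-- Orthogonality for a real-linear functional `φ` (real or imaginary part). -/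
theorem core_phi (φ : ℂ →L[ℝ] ℝ) (hφ : ∀ z, |φ z| ≤ ‖z‖) (n : ℕ) (r : ℕ → ℝ) (hn : 1 ≤ n)
    (hφr : ∀ (z : ℂ) (x : ℝ), φ (z * (x : ℂ)) = φ z * x)
    (hpos : 0 < r 1) (hmono : ∀ j, 1 ≤ j → j < n → r j < r (j + 1))
    (S F : Lambda0) (hS : IsBLSpline n r S.f)
    (hinterp : ∀ j, 1 ≤ j → j ≤ n → F.f (r j) = S.f (r j))
    (hextra : Filter.Tendsto (fun x => F.f x - S.f x) (nhdsWithin 0 (Set.Ioi 0)) (nhds 0) ∨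
      NonSingularBLS (r 1) S.f)
    (hC : IntegrableOn (fun x : ℝ => x * ‖F.f'' x - S.f'' x‖ ^ 2 + (1 / x) * ‖F.f' x - S.f' x‖ ^ 2)
      (Ioi 0)) :
    IntegrableOn (fun x => x * (φ (F.f'' x - S.f'' x) * φ (S.f'' x)) +
      1 / x * (φ (F.f' x - S.f' x) * φ (S.f' x))) (Ioi 0) ∧
    ∫ x in Ioi (0:ℝ), (x * (φ (F.f'' x - S.f'' x) * φ (S.f'' x)) +
      1 / x * (φ (F.f' x - S.f' x) * φ (S.f' x))) = 0 := by
  obtain ⟨d2, c2⟩ := spline_deriv2 S hS.smooth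
  have mφ : ∀ {f : ℝ → ℂ}, AEStronglyMeasurable f (volume.restrict (Ioi (0:ℝ))) →
      AEStronglyMeasurable (fun x => φ (f x)) (volume.restrict (Ioi (0:ℝ))) :=
    fun h => φ.continuous.comp_aestronglyMeasurable h
  have mx : AEStronglyMeasurable (fun x : ℝ => x) (volume.restrict (Ioi (0:ℝ))) :=
    measurable_id.aestronglyMeasurable
  have mi : AEStronglyMeasurable (fun x : ℝ => 1 / x) (volume.restrict (Ioi (0:ℝ))) :=
    (measurable_const.div measurable_id).aestronglyMeasurable
  have mg2 := mφ (F.meas2.sub S.meas2)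
  have mg1 := mφ (F.meas1.sub S.meas1)
  have hI : IntegrableOn (fun x => x * (φ (F.f'' x - S.f'' x) * φ (S.f'' x)) +
      1 / x * (φ (F.f' x - S.f' x) * φ (S.f' x))) (Ioi 0) := by
    refine (hC.add S.energyFin).mono'
      ((mx.mul (mg2.mul (mφ S.meas2))).add (mi.mul (mg1.mul (mφ S.meas1)))) ?_
    refine (ae_restrict_iff' measurableSet_Ioi).2 (Eventually.of_forall fun x hx => ?_)
    have hx0 : 0 < x := hx
    have key : ∀ z w : ℂ, |φ z * φ w| ≤ ‖z‖ ^ 2 + ‖w‖ ^ 2 := by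
      intro z w
      rw [abs_mul]
      have := mul_le_mul (hφ z) (hφ w) (abs_nonneg _) (norm_nonneg _)
      nlinarith [sq_nonneg (‖z‖ - ‖w‖), sq_nonneg ‖z‖, sq_nonneg ‖w‖]
    have k1 := mul_le_mul_of_nonneg_left (key (F.f'' x - S.f'' x) (S.f'' x)) hx0.le
    have k2 := mul_le_mul_of_nonneg_left (key (F.f' x - S.f' x) (S.f' x)) (one_div_pos.2 hx0).le
    rw [Real.norm_eq_abs]
    refine (abs_add_le _ _).trans ?_
    rw [abs_mul, abs_mul (1 / x), abs_of_pos hx0, abs_of_pos (one_div_pos.2 hx0)]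
    simp only [Pi.add_apply]
    linarith
  refine ⟨hI, ?_⟩
  have hae : (fun x => x * (φ (F.f'' x - S.f'' x) * φ (S.f'' x)) +
      1 / x * (φ (F.f' x - S.f' x) * φ (S.f' x))) =ᵐ[volume.restrict (Ioi (0:ℝ))]
      (fun x => x * (φ (F.f'' x - S.f'' x) * φ (deriv S.f' x)) +
      1 / x * (φ (F.f' x - S.f' x) * φ (S.f' x))) := by
    filter_upwards [S.ae_deriv] with x hx
    rw [← hx]
  rw [integral_congr_ae hae]
  have hE : IntegrableOn (fun x => 1 / x * (φ (F.f' x - S.f' x)) ^ 2) (Ioi 0) := by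
    refine hC.mono' (mi.mul (mg1.pow 2)) ?_
    refine (ae_restrict_iff' measurableSet_Ioi).2 (Eventually.of_forall fun x hx => ?_)
    have hx0 : 0 < x := hx
    have : 0 < 1 / x := one_div_pos.2 hx0
    rw [Real.norm_of_nonneg (by positivity)]
    have k1 : (φ (F.f' x - S.f' x)) ^ 2 ≤ ‖F.f' x - S.f' x‖ ^ 2 := by
      rw [← sq_abs]; exact pow_le_pow_left₀ (abs_nonneg _) (hφ _) 2
    have k2 := mul_le_mul_of_nonneg_left k1 this.le
    have : 0 ≤ x * ‖F.f'' x - S.f'' x‖ ^ 2 := by positivity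
    linarith
  have hdφ : ∀ {f : ℝ → ℂ} {f' : ℂ} {x : ℝ}, HasDerivAt f f' x →
      HasDerivAt (fun x => φ (f x)) (φ f') x := fun h => φ.hasFDerivAt.comp_hasDerivAt _ h
  have hφr2 : ∀ (z : ℂ) (x : ℝ), φ (z * (x : ℂ) ^ 2) = φ z * x ^ 2 := by
    intro z x; rw [← Complex.ofReal_pow, hφr]
  refine core_real n r hn hpos hmono (fun x => φ (S.f x)) (fun x => φ (S.f' x))
    (fun x => φ (deriv S.f' x)) (fun x => φ (F.f x - S.f x)) (fun x => φ (F.f' x - S.f' x))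
    (fun x => φ (F.f'' x - S.f'' x)) ?_ ?_ ?_ ?_ ?_ ?_ ?_ hE (hI.congr hae) ?_ ?_ ?_ ?_
  · exact fun x hx => hdφ (S.hasDeriv x hx)
  · exact fun x hx => hdφ (d2 x hx)
  · exact φ.continuous.comp_continuousOn c2
  · exact fun x hx => hdφ ((F.hasDeriv x hx).sub (S.hasDeriv x hx))
  · exact φ.continuous.comp_continuousOn (F.contDeriv.sub S.contDeriv)
  · intro a b ha hab
    exact φ.integrable_comp ((F.locAC a b ha hab).1.sub (S.locAC a b ha hab).1)
  · intro a b ha hab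
    obtain ⟨f1, f2⟩ := F.locAC a b ha hab
    obtain ⟨s1, s2⟩ := S.locAC a b ha hab
    have fi : IntervalIntegrable F.f'' volume a b := by
      rwa [intervalIntegrable_iff_integrableOn_Icc_of_le hab]
    have si : IntervalIntegrable S.f'' volume a b := by
      rwa [intervalIntegrable_iff_integrableOn_Icc_of_le hab]
    rw [φ.intervalIntegral_comp_comm (fi.sub si), intervalIntegral.integral_sub fi si,
      f2 b ⟨hab, le_rfl⟩, s2 b ⟨hab, le_rfl⟩, ← map_add]
    congr 1; ring
  · intro j hj hjn
    simp [hinterp j hj hjn]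
  · intro j hj hjn
    obtain ⟨a, b, c, d, hf⟩ := hS.pieces j hj hjn
    refine ⟨φ a, φ b, φ c, φ d, fun x hx => ?_⟩
    simp only [hf x hx, map_add, hφr, hφr2]
  · rcases hextra with h | ⟨a, c, hf⟩
    · obtain ⟨a, b, c, hf⟩ := hS.left
      refine ⟨φ a, φ b, φ c, ?_, fun x hx => ?_⟩
      · have := ((φ.continuous.tendsto 0).comp h).const_mul (φ b)
        simpa [Function.comp_def] using this
      · simp only [hf x hx, map_add, hφr, hφr2]
    · refine ⟨φ a, 0, φ c, by simp, fun x hx => ?_⟩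
      simp only [hf x hx, map_add, hφr2]
      ring
  · obtain ⟨c, d, hf⟩ := hS.right
    refine ⟨φ c, φ d, fun x hx => ?_⟩
    simp only [hf x hx, map_add, hφr]

/-- first integral relation `‖f‖₀² = ‖σ‖₀² + ‖f − σ‖₀²` for a Beppo Levi
`L₀`-spline `σ` and `f ∈ Λ₀` agreeing with `σ` at the knots, provided either
`lim_{r→0⁺}(f(r) − σ(r)) = 0` or `σ` is non-singular. -/
theorem stmt5 (n : ℕ) (r : ℕ → ℝ) (hn : 1 ≤ n) (hpos : 0 < r 1)
    (hmono : ∀ j, 1 ≤ j → j < n → r j < r (j + 1))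
    (S F : Lambda0) (hS : IsBLSpline n r S.f)
    (hinterp : ∀ j, 1 ≤ j → j ≤ n → F.f (r j) = S.f (r j))
    (hextra : Filter.Tendsto (fun x => F.f x - S.f x) (nhdsWithin 0 (Set.Ioi 0)) (nhds 0) ∨
      NonSingularBLS (r 1) S.f) :
    energySq F.f' F.f'' =
      energySq S.f' S.f'' +
        energySq (fun x => F.f' x - S.f' x) (fun x => F.f'' x - S.f'' x) := by
  have mx : AEStronglyMeasurable (fun x : ℝ => x) (volume.restrict (Ioi (0:ℝ))) :=
    measurable_id.aestronglyMeasurable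
  have mi : AEStronglyMeasurable (fun x : ℝ => 1 / x) (volume.restrict (Ioi (0:ℝ))) :=
    (measurable_const.div measurable_id).aestronglyMeasurable
  have hC : IntegrableOn
      (fun x : ℝ => x * ‖F.f'' x - S.f'' x‖ ^ 2 + (1 / x) * ‖F.f' x - S.f' x‖ ^ 2) (Ioi 0) := by
    refine ((F.energyFin.add S.energyFin).const_mul 2).mono'
      ((mx.mul ((F.meas2.sub S.meas2).norm.pow 2)).add
        (mi.mul ((F.meas1.sub S.meas1).norm.pow 2))) ?_
    refine (ae_restrict_iff' measurableSet_Ioi).2 (Eventually.of_forall fun x hx => ?_)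
    have hx0 : 0 < x := hx
    have hxi : 0 < 1 / x := one_div_pos.2 hx0
    have key : ∀ z w : ℂ, ‖z - w‖ ^ 2 ≤ 2 * (‖z‖ ^ 2 + ‖w‖ ^ 2) := by
      intro z w
      have h1 := pow_le_pow_left₀ (norm_nonneg _) (norm_sub_le z w) 2
      nlinarith [sq_nonneg (‖z‖ - ‖w‖)]
    have k1 := mul_le_mul_of_nonneg_left (key (F.f'' x) (S.f'' x)) hx0.le
    have k2 := mul_le_mul_of_nonneg_left (key (F.f' x) (S.f' x)) hxi.le
    rw [Real.norm_of_nonneg (by positivity)]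
    simp only [Pi.add_apply]
    linarith
  obtain ⟨i1, e1⟩ := core_phi Complex.reCLM Complex.abs_re_le_norm n r hn (by simp) hpos hmono
    S F hS hinterp hextra hC
  obtain ⟨i2, e2⟩ := core_phi Complex.imCLM Complex.abs_im_le_norm n r hn (by simp) hpos hmono
    S F hS hinterp hextra hC
  have hsum := integral_add (S.energyFin.add hC) ((i1.add i2).const_mul 2)
  rw [integral_const_mul, integral_add' i1 i2, e1, e2, integral_add' S.energyFin hC] at hsum
  simp only [add_zero, mul_zero] at hsum
  unfold energySq
  rw [← hsum]
  refine setIntegral_congr_fun measurableSet_Ioi fun x hx => ?_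
  simp only [Pi.add_apply, sq_norm_re_im, Complex.reCLM_apply, Complex.imCLM_apply,
    Complex.sub_re, Complex.sub_im]
  ring
end
end

section
/- Variational characterization of σ^A: let α, ν₁, …, ν_n be real values and let σ^A be the unique Beppo Levi L₀-spline on ρ with σ^A(r_j) = ν_j for all j and σ^A(0) = α. If f ∈ Λ₀ satisfies f(r_j) = ν_j for all j ∈ {1,…,n} and f(0) = α, and f ≠ σ^A, then ‖σ^A‖₀ < ‖f‖₀. -/
open MeasureTheory Set Filter

noncomputable section

namespace BLAux

/-- A complex primitive of an integrable function is absolutely continuous. -/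
lemma ac_primitive {w : ℝ → ℂ} {a b : ℝ} (hw : IntervalIntegrable w volume a b) :
    AbsolutelyContinuousOnInterval (fun x => ∫ t in a..x, w t) a b := by
  have hN : AbsolutelyContinuousOnInterval (fun x => ∫ t in a..x, ‖w t‖) a b :=
    hw.norm.absolutelyContinuousOnInterval_intervalIntegral (by simp)
  rw [absolutelyContinuousOnInterval_iff] at hN ⊢
  intro ε hε
  obtain ⟨δ, hδ, h⟩ := hN ε hε
  refine ⟨δ, hδ, fun E hE hE2 => lt_of_le_of_lt (Finset.sum_le_sum ?_) (h E hE hE2)⟩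
  intro i hi
  obtain ⟨h1, h2⟩ := hE.1 i hi
  have hI : ∀ x ∈ uIcc a b, IntervalIntegrable w volume a x := fun x hx =>
    hw.mono_set (uIcc_subset_uIcc_left hx)
  rw [dist_eq_norm, dist_eq_norm, intervalIntegral.integral_interval_sub_left (hI _ h1) (hI _ h2),
    intervalIntegral.integral_interval_sub_left (hI _ h1).norm (hI _ h2).norm]
  exact intervalIntegral.norm_integral_le_abs_integral_norm

lemma ac_congr {u v : ℝ → ℂ} {a b : ℝ} (h : EqOn u v (uIcc a b))
    (hv : AbsolutelyContinuousOnInterval v a b) : AbsolutelyContinuousOnInterval u a b := by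
  rw [absolutelyContinuousOnInterval_iff] at hv ⊢
  intro ε hε
  obtain ⟨δ, hδ, h'⟩ := hv ε hε
  refine ⟨δ, hδ, fun E hE hE2 => lt_of_le_of_lt (Finset.sum_le_sum ?_) (h' E hE hE2)⟩
  intro i hi
  obtain ⟨h1, h2⟩ := hE.1 i hi
  rw [h h1, h h2]

lemma ac_const (c : ℂ) (a b : ℝ) : AbsolutelyContinuousOnInterval (fun _ => c) a b := by
  apply LipschitzOnWith.absolutelyContinuousOnInterval (K := 0)
  exact (LipschitzWith.const c).lipschitzOnWith

lemma ac_of_primitive {v w : ℝ → ℂ} {a b : ℝ} (hab : a ≤ b) (hw : IntervalIntegrable w volume a b)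
    (hv : ∀ x ∈ Icc a b, v x = v a + ∫ t in a..x, w t) :
    AbsolutelyContinuousOnInterval v a b := by
  refine ac_congr (v := (fun _ => v a) + fun x => ∫ t in a..x, w t) ?_
    ((ac_const _ _ _).add (ac_primitive hw))
  intro x hx
  rw [uIcc_of_le hab] at hx
  simpa using hv x hx

/-- a.e. differentiability of a primitive -/
lemma ae_deriv_of_primitive {v w : ℝ → ℂ} {a b : ℝ} (hab : a ≤ b)
    (hw : IntervalIntegrable w volume a b)
    (hv : ∀ x ∈ Icc a b, v x = v a + ∫ t in a..x, w t) :
    ∀ᵐ x, x ∈ Ioo a b → HasDerivAt v (w x) x := by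
  filter_upwards [hw.ae_hasDerivAt_integral] with x hx hxI
  have h1 := (hx (by rw [uIcc_of_le hab]; exact Ioo_subset_Icc_self hxI) a (by simp)).const_add (v a)
  refine h1.congr_of_eventuallyEq ?_
  filter_upwards [Ioo_mem_nhds hxI.1 hxI.2] with y hy
  exact hv y (Ioo_subset_Icc_self hy)

lemma ibp {u u' v w : ℝ → ℂ} {a b : ℝ} (hab : a ≤ b)
    (hu' : IntervalIntegrable u' volume a b)
    (hu : ∀ x ∈ Icc a b, u x = u a + ∫ t in a..x, u' t)
    (hw : IntervalIntegrable w volume a b)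
    (hv : ∀ x ∈ Icc a b, v x = v a + ∫ t in a..x, w t) :
    ∫ x in a..b, (u x * w x + u' x * v x) = u b * v b - u a * v a := by
  have hua := ac_of_primitive hab hu' hu
  have hva := ac_of_primitive hab hw hv
  have hi : IntervalIntegrable (fun x => u x * w x + u' x * v x) volume a b :=
    (hw.continuousOn_mul hua.continuousOn).add (hu'.mul_continuousOn hva.continuousOn)
  have hac : AbsolutelyContinuousOnInterval
      (u • v - fun x => ∫ t in a..x, (u t * w t + u' t * v t)) a b :=
    (hua.smul hva).sub (ac_primitive hi)
  have hz : ∀ᵐ x, x ≠ a := by simp [ae_iff, measure_singleton]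
  have hz' : ∀ᵐ x, x ≠ b := by simp [ae_iff, measure_singleton]
  obtain ⟨C, hC⟩ := hac.const_of_ae_hasDerivAt_zero (by
    filter_upwards [ae_deriv_of_primitive hab hu' hu, ae_deriv_of_primitive hab hw hv,
      hi.ae_hasDerivAt_integral, hz, hz'] with x h1 h2 h3 h4 h5 hx
    have hx' := hx
    rw [uIcc_of_le hab] at hx'
    have hx2 : x ∈ Ioo a b := ⟨lt_of_le_of_ne hx'.1 (Ne.symm h4), lt_of_le_of_ne hx'.2 h5⟩
    have := ((h1 hx2).mul (h2 hx2)).sub (h3 hx a (by simp))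
    convert! this using 1
    ring)
  have h1 := hC a (by simp)
  have h2 := hC b (by simp)
  simp at h1 h2
  rw [← h1] at h2
  rw [← h2]; ring

end BLAux
namespace BLAux

lemma meas_f'' (F : Lambda0) : AEStronglyMeasurable F.f'' (volume.restrict (Ioi 0)) := by
  apply LocallyIntegrableOn.aestronglyMeasurable
  intro x hx
  have hx : 0 < x := hx
  refine ⟨Icc (x / 2) (x + 1), ?_, (F.locAC _ _ (by positivity) (by linarith)).1⟩
  exact mem_nhdsWithin_of_mem_nhds (Icc_mem_nhds (by linarith) (by linarith))

lemma meas_f' (F : Lambda0) : AEStronglyMeasurable F.f' (volume.restrict (Ioi 0)) :=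
  F.contDeriv.aestronglyMeasurable measurableSet_Ioi

/-- The energy density. -/
def dens (F : Lambda0) (r : ℝ) : ℝ := r * ‖F.f'' r‖ ^ 2 + (1 / r) * ‖F.f' r‖ ^ 2

lemma dens_nonneg (F : Lambda0) {r : ℝ} (hr : 0 < r) : 0 ≤ dens F r := by
  unfold dens; positivity

lemma meas_recip : AEStronglyMeasurable (fun r : ℝ => 1 / r) (volume.restrict (Ioi 0)) :=
  (measurable_const.div measurable_id).aestronglyMeasurable

lemma meas_recipC : AEStronglyMeasurable (fun r : ℝ => 1 / (r : ℂ)) (volume.restrict (Ioi 0)) :=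
  (measurable_const.div Complex.measurable_ofReal).aestronglyMeasurable

lemma sq_sub_le (a b : ℂ) : ‖a - b‖ ^ 2 ≤ 2 * ‖a‖ ^ 2 + 2 * ‖b‖ ^ 2 := by
  have h := norm_sub_le a b
  nlinarith [sq_nonneg (‖a‖ - ‖b‖), norm_nonneg (a - b), norm_nonneg a, norm_nonneg b]

lemma ii_of_locAC (F : Lambda0) {a b : ℝ} (ha : 0 < a) (hab : a ≤ b) :
    IntervalIntegrable F.f'' volume a b := by
  rw [intervalIntegrable_iff_integrableOn_Icc_of_le hab]
  exact (F.locAC a b ha hab).1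

/-- The difference of two elements of the energy space. -/
def sub (F S : Lambda0) : Lambda0 where
  f := fun x => F.f x - S.f x
  f' := fun x => F.f' x - S.f' x
  f'' := fun x => F.f'' x - S.f'' x
  hasDeriv := fun r hr => (F.hasDeriv r hr).sub (S.hasDeriv r hr)
  contDeriv := F.contDeriv.sub S.contDeriv
  locAC := by
    intro a b ha hab
    refine ⟨(F.locAC a b ha hab).1.sub (S.locAC a b ha hab).1, fun x hx => ?_⟩
    rw [intervalIntegral.integral_sub (ii_of_locAC F ha hx.1) (ii_of_locAC S ha hx.1),
      (F.locAC a b ha hab).2 x hx, (S.locAC a b ha hab).2 x hx]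
    ring
  energyFin := by
    have hb := (F.energyFin.const_mul 2).add (S.energyFin.const_mul 2)
    refine Integrable.mono' hb ?_ ?_
    · exact (measurable_id.aestronglyMeasurable.mul
        (((meas_f'' F).sub (meas_f'' S)).norm.pow 2)).add
        (meas_recip.mul (((meas_f' F).sub (meas_f' S)).norm.pow 2))
    · filter_upwards [ae_restrict_mem measurableSet_Ioi] with r hr
      have hr : 0 < r := hr
      rw [Real.norm_of_nonneg (by positivity)]
      have h1 := mul_le_mul_of_nonneg_left (sq_sub_le (F.f'' r) (S.f'' r)) hr.le
      have h2 := mul_le_mul_of_nonneg_left (sq_sub_le (F.f' r) (S.f' r))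
        (by positivity : 0 ≤ 1 / r)
      simp only [Pi.add_apply]
      linarith

/-- The cross density. -/
def cross (F G : Lambda0) (r : ℝ) : ℂ :=
  (r : ℂ) * F.f'' r * (starRingEnd ℂ) (G.f'' r) +
      (1 / (r : ℂ)) * F.f' r * (starRingEnd ℂ) (G.f' r)

lemma cross_integrable (F G : Lambda0) : IntegrableOn (cross F G) (Ioi 0) := by
  have hb := F.energyFin.add G.energyFin
  refine Integrable.mono' hb ?_ ?_
  · exact ((Complex.measurable_ofReal.aestronglyMeasurable.mul (meas_f'' F)).mul
        (Complex.continuous_conj.comp_aestronglyMeasurable (meas_f'' G))).add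
      ((meas_recipC.mul (meas_f' F)).mul
        (Complex.continuous_conj.comp_aestronglyMeasurable (meas_f' G)))
  · filter_upwards [ae_restrict_mem measurableSet_Ioi] with r hr
    have hr : 0 < r := hr
    unfold cross
    refine (norm_add_le _ _).trans ?_
    simp only [norm_mul, norm_div, norm_one, Complex.norm_real, RCLike.norm_conj, Pi.add_apply,
      Real.norm_of_nonneg hr.le]
    have key : ∀ x y : ℝ, 0 ≤ x → 0 ≤ y → x * y ≤ x ^ 2 + y ^ 2 := fun x y hx hy => by
      nlinarith [sq_nonneg (x - y), mul_nonneg hx hy]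
    have h1 := mul_le_mul_of_nonneg_left
      (key _ _ (norm_nonneg (F.f'' r)) (norm_nonneg (G.f'' r))) hr.le
    have h2 := mul_le_mul_of_nonneg_left (key _ _ (norm_nonneg (F.f' r)) (norm_nonneg (G.f' r)))
        (by positivity : 0 ≤ 1 / r)
    linarith

lemma energy_expand (F S : Lambda0) :
    energySq F.f' F.f'' = energySq S.f' S.f'' + energySq (sub F S).f' (sub F S).f''
      + 2 * (∫ r in Ioi (0:ℝ), cross (sub F S) S r).re := by
  have hc := cross_integrable (sub F S) S
  have hre : (∫ r in Ioi (0:ℝ), cross (sub F S) S r).re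
      = ∫ r in Ioi (0:ℝ), (cross (sub F S) S r).re := by
    have := integral_re (𝕜 := ℂ) hc
    simpa using this.symm
  rw [hre]
  unfold energySq
  rw [← integral_const_mul, ← integral_add S.energyFin (sub F S).energyFin]
  refine Eq.trans ?_ (integral_add
    (S.energyFin.add (sub F S).energyFin) ((Integrable.re hc).const_mul 2))
  refine integral_congr_ae (Eventually.of_forall fun r => ?_)
  have hF2 : F.f'' r = (sub F S).f'' r + S.f'' r := by simp [sub]
  have hF1 : F.f' r = (sub F S).f' r + S.f' r := by simp [sub]
  have e : ∀ x y : ℂ, ‖x + y‖ ^ 2 = ‖x‖ ^ 2 + ‖y‖ ^ 2 + 2 * (x * (starRingEnd ℂ) y).re := by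
    intro x y
    rw [← Complex.normSq_eq_norm_sq, ← Complex.normSq_eq_norm_sq, ← Complex.normSq_eq_norm_sq,
      Complex.normSq_add]
  have hr1 : ∀ (c : ℝ) (x y : ℂ), ((c : ℂ) * x * y).re = c * (x * y).re := by
    intro c x y
    rw [mul_assoc, Complex.re_ofReal_mul]
  have hcr : (cross (sub F S) S r).re
      = r * ((sub F S).f'' r * (starRingEnd ℂ) (S.f'' r)).re
        + (1 / r) * ((sub F S).f' r * (starRingEnd ℂ) (S.f' r)).re := by
    unfold cross
    have h1 : (1 / (r : ℂ)) = ((1 / r : ℝ) : ℂ) := by push_cast; rfl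
    rw [h1, Complex.add_re, hr1, hr1]
  simp only [RCLike.re_eq_complex_re, Pi.add_apply]
  rw [hcr, hF2, hF1, e, e]
  ring

lemma growth (G : Lambda0) {a b : ℝ} (ha : 0 < a) (hab : a ≤ b) :
    ‖G.f' b - G.f' a‖ ≤ energySq G.f' G.f'' + (Real.log b - Real.log a) := by
  have hb : 0 < b := ha.trans_le hab
  have h1 : G.f' b - G.f' a = ∫ t in a..b, G.f'' t := by
    rw [(G.locAC a b ha hab).2 b ⟨hab, le_rfl⟩]; ring
  have hsub : Ioc a b ⊆ Ioi 0 := fun x hx => ha.trans hx.1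
  have hd : IntervalIntegrable (dens G) volume a b := by
    rw [intervalIntegrable_iff_integrableOn_Ioc_of_le hab]
    exact IntegrableOn.mono_set G.energyFin hsub
  have h0 : (0:ℝ) ∉ uIcc a b := by
    rw [uIcc_of_le hab]; exact fun h => absurd h.1 (not_le.2 ha)
  have hinv : IntervalIntegrable (fun x : ℝ => 1 / x) volume a b :=
    intervalIntegral.intervalIntegrable_one_div (fun x hx h => h0 (h ▸ hx)) continuousOn_id
  rw [h1]
  calc ‖∫ t in a..b, G.f'' t‖ ≤ ∫ t in a..b, ‖G.f'' t‖ :=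
        intervalIntegral.norm_integral_le_integral_norm hab
    _ ≤ ∫ t in a..b, (dens G t + 1 / t) := by
        refine intervalIntegral.integral_mono_on hab (ii_of_locAC G ha hab).norm (hd.add hinv) ?_
        intro t ht
        have ht0 : 0 < t := ha.trans_le ht.1
        unfold dens
        have : ‖G.f'' t‖ ≤ t * ‖G.f'' t‖ ^ 2 + 1 / t := by
          rw [← sub_nonneg]
          have : t * ‖G.f'' t‖ ^ 2 + 1 / t - ‖G.f'' t‖
            = ((t * ‖G.f'' t‖ - 1 / 2) ^ 2 + 3 / 4) / t := by field_simp; ring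
          rw [this]; positivity
        have h2 : 0 ≤ 1 / t * ‖G.f' t‖ ^ 2 := by positivity
        linarith
    _ = (∫ t in a..b, dens G t) + ∫ t in a..b, 1 / t := intervalIntegral.integral_add hd hinv
    _ ≤ _ := by
        refine add_le_add ?_ ?_
        · rw [intervalIntegral.integral_of_le hab]
          refine setIntegral_mono_set G.energyFin ?_ hsub.eventuallyLE
          filter_upwards [ae_restrict_mem measurableSet_Ioi] with r hr
          exact dens_nonneg G hr
        · rw [integral_one_div h0, Real.log_div hb.ne' ha.ne']

lemma growth' (G : Lambda0) {x : ℝ} (hx : 0 < x) :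
    ‖G.f' x‖ ≤ (‖G.f' 1‖ + energySq G.f' G.f'') + |Real.log x| := by
  rcases le_total x 1 with h | h
  · have h1 := growth G hx h
    rw [Real.log_one] at h1
    have h2 := norm_sub_norm_le (G.f' x) (G.f' 1)
    rw [norm_sub_rev] at h2
    have := neg_abs_le (Real.log x)
    linarith
  · have h1 := growth G one_pos h
    rw [Real.log_one] at h1
    have h2 := norm_sub_norm_le (G.f' x) (G.f' 1)
    have := le_abs_self (Real.log x)
    linarith

/-- Zero energy forces a constant function. -/
lemma energy_pos (G : Lambda0) {p : ℝ} (hp : 0 < p) (hGp : G.f p = 0)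
    (hne : ∃ x, 0 < x ∧ G.f x ≠ 0) : 0 < energySq G.f' G.f'' := by
  have hnn : 0 ≤ᵐ[volume.restrict (Ioi 0)]
      fun r : ℝ => r * ‖G.f'' r‖ ^ 2 + (1 / r) * ‖G.f' r‖ ^ 2 := by
    filter_upwards [ae_restrict_mem measurableSet_Ioi] with r hr
    exact dens_nonneg G hr
  have h0 : 0 ≤ energySq G.f' G.f'' := integral_nonneg_of_ae hnn
  refine lt_of_le_of_ne h0 fun hz => ?_
  have hz' := (setIntegral_eq_zero_iff_of_nonneg_ae hnn G.energyFin).1 hz.symm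
  have hae : G.f' =ᵐ[volume.restrict (Ioi 0)] fun _ => 0 := by
    filter_upwards [hz', ae_restrict_mem measurableSet_Ioi] with r hr hr0
    have hr0 : 0 < r := hr0
    simp only [Pi.zero_apply] at hr
    have h1 : 0 ≤ r * ‖G.f'' r‖ ^ 2 := by positivity
    have h2 : 0 ≤ 1 / r * ‖G.f' r‖ ^ 2 := by positivity
    have h3 : 1 / r * ‖G.f' r‖ ^ 2 = 0 := by linarith
    have : (1 / r) ≠ 0 := by positivity
    simpa [this, hr0.ne'] using h3
  have heq : EqOn G.f' (fun _ => 0) (Ioi 0) :=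
    Measure.eqOn_open_of_ae_eq hae isOpen_Ioi G.contDeriv continuousOn_const
  obtain ⟨x, hx, hxne⟩ := hne
  apply hxne
  rw [← hGp]
  refine isOpen_Ioi.is_const_of_deriv_eq_zero (𝕜 := ℝ) isPreconnected_Ioi
    (fun y hy => (G.hasDeriv y hy).differentiableAt.differentiableWithinAt) ?_ hx hp
  intro y hy
  rw [(G.hasDeriv y hy).deriv, heq hy]; rfl

end BLAux
namespace BLAux

/-- first derivative of an element of the kernel -/
def P1 (a b d : ℂ) (x : ℝ) : ℂ :=
  2 * a * (x : ℂ) + b * (2 * (x : ℂ) * (Real.log x : ℂ) + (x : ℂ)) + d * (x : ℂ)⁻¹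

/-- second derivative of an element of the kernel -/
def P2 (a b d : ℂ) (x : ℝ) : ℂ :=
  2 * a + b * (2 * (Real.log x : ℂ) + 3) - d * ((x : ℂ)⁻¹) ^ 2

/-- derivative of `x * P2 x` -/
def U1 (a b d : ℂ) (x : ℝ) : ℂ :=
  2 * a + b * (2 * (Real.log x : ℂ) + 5) + d * ((x : ℂ)⁻¹) ^ 2

lemma hasDeriv_log {x : ℝ} (hx : 0 < x) :
    HasDerivAt (fun y : ℝ => (Real.log y : ℂ)) ((x : ℂ)⁻¹) x := by
  have := (Real.hasDerivAt_log hx.ne').ofReal_comp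
  simpa using this

lemma hasDeriv_id (x : ℝ) : HasDerivAt (fun y : ℝ => (y : ℂ)) 1 x := by
  simpa using (hasDerivAt_id x).ofReal_comp

lemma hasDeriv_inv {x : ℝ} (hx : 0 < x) :
    HasDerivAt (fun y : ℝ => (y : ℂ)⁻¹) (-((x : ℂ)⁻¹) ^ 2) x := by
  have h := (hasDeriv_id x).inv (by exact_mod_cast hx.ne')
  convert! h using 1
  field_simp

lemma hasDeriv_P (a b c d : ℂ) {x : ℝ} (hx : 0 < x) :
    HasDerivAt (fun x : ℝ => a * (x : ℂ) ^ 2 + b * (x : ℂ) ^ 2 * (Real.log x : ℂ) + c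
      + d * (Real.log x : ℂ)) (P1 a b d x) x := by
  have hx' : (x : ℂ) ≠ 0 := by exact_mod_cast hx.ne'
  have h2 := (hasDeriv_id x).pow 2
  have h := (((h2.const_mul a).add ((h2.const_mul b).mul (hasDeriv_log hx))).add_const c).add
    ((hasDeriv_log hx).const_mul d)
  convert! h using 1
  unfold P1
  simp
  field_simp
  try ring

lemma hasDeriv_P1 (a b d : ℂ) {x : ℝ} (hx : 0 < x) :
    HasDerivAt (P1 a b d) (P2 a b d x) x := by
  have hx' : (x : ℂ) ≠ 0 := by exact_mod_cast hx.ne'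
  have h1 := hasDeriv_id x
  have h := ((h1.const_mul (2 * a)).add
    ((((h1.const_mul 2).mul (hasDeriv_log hx)).add h1).const_mul b)).add
    ((hasDeriv_inv hx).const_mul d)
  convert! h using 1
  unfold P2
  field_simp
  try ring

lemma hasDeriv_U (a b d : ℂ) {x : ℝ} (hx : 0 < x) :
    HasDerivAt (fun x : ℝ => (x : ℂ) * P2 a b d x) (U1 a b d x) x := by
  have hx' : (x : ℂ) ≠ 0 := by exact_mod_cast hx.ne'
  have h1 := hasDeriv_id x
  have h := h1.mul (((((hasDeriv_log hx).const_mul 2).add_const 3).const_mul b).const_add (2 * a)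
    |>.sub (((hasDeriv_inv hx).pow 2).const_mul d))
  convert! h using 1
  unfold U1
  simp
  field_simp
  ring

lemma cont_U1 (a b d : ℂ) : ContinuousOn (U1 a b d) (Ioi 0) := by
  intro x hx
  have hx : 0 < x := hx
  have h1 := (hasDeriv_log hx).continuousAt
  have h2 := (hasDeriv_inv hx).continuousAt
  unfold U1
  exact (((continuousAt_const.add (continuousAt_const.mul
    ((continuousAt_const.mul h1).add continuousAt_const))).add
    (continuousAt_const.mul (h2.pow 2)))).continuousWithinAt

lemma conj_P1 (a b d : ℂ) (x : ℝ) : (starRingEnd ℂ) (P1 a b d x)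
    = P1 (starRingEnd ℂ a) (starRingEnd ℂ b) (starRingEnd ℂ d) x := by
  simp [P1, Complex.conj_ofNat]

lemma conj_P2 (a b d : ℂ) (x : ℝ) : (starRingEnd ℂ) (P2 a b d x)
    = P2 (starRingEnd ℂ a) (starRingEnd ℂ b) (starRingEnd ℂ d) x := by
  simp [P2, Complex.conj_ofNat]

lemma S1_eq (S : Lambda0) {p q : ℝ} (hp : 0 ≤ p) {a b c d : ℂ}
    (hS : ∀ x ∈ Ioo p q, S.f x = a * (x : ℂ) ^ 2 + b * (x : ℂ) ^ 2 * (Real.log x : ℂ) + c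
      + d * (Real.log x : ℂ)) : ∀ x ∈ Ioo p q, S.f' x = P1 a b d x := by
  intro x hx
  have hx0 : 0 < x := hp.trans_lt hx.1
  refine (S.hasDeriv x hx0).unique ((hasDeriv_P a b c d hx0).congr_of_eventuallyEq ?_)
  filter_upwards [Ioo_mem_nhds hx.1 hx.2] with y hy using hS y hy

lemma s2_eq (S : Lambda0) {s2 : ℝ → ℂ} (hds : ∀ x, 0 < x → HasDerivAt S.f' (s2 x) x)
    {p q : ℝ} (hp : 0 ≤ p) {a b c d : ℂ}
    (hS : ∀ x ∈ Ioo p q, S.f x = a * (x : ℂ) ^ 2 + b * (x : ℂ) ^ 2 * (Real.log x : ℂ) + c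
      + d * (Real.log x : ℂ)) : ∀ x ∈ Ioo p q, s2 x = P2 a b d x := by
  intro x hx
  have hx0 : 0 < x := hp.trans_lt hx.1
  refine (hds x hx0).unique ((hasDeriv_P1 a b d hx0).congr_of_eventuallyEq ?_)
  filter_upwards [Ioo_mem_nhds hx.1 hx.2] with y hy using S1_eq S hp hS y hy

lemma cont_P2 (a b d : ℂ) : ContinuousOn (P2 a b d) (Ioi 0) := by
  intro x hx
  have hx : 0 < x := hx
  have h1 := (hasDeriv_log hx).continuousAt
  have h2 := (hasDeriv_inv hx).continuousAt
  unfold P2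
  exact (((continuousAt_const.add (continuousAt_const.mul
    ((continuousAt_const.mul h1).add continuousAt_const))).sub
    (continuousAt_const.mul (h2.pow 2)))).continuousWithinAt

lemma piece (G S : Lambda0) {s2 : ℝ → ℂ} (hc : ContinuousOn s2 (Ioi 0))
    (hds : ∀ x, 0 < x → HasDerivAt S.f' (s2 x) x)
    {p q : ℝ} (hp : 0 < p) (hpq : p < q) {a b c d : ℂ}
    (hS : ∀ x ∈ Ioo p q, S.f x = a * (x : ℂ) ^ 2 + b * (x : ℂ) ^ 2 * (Real.log x : ℂ) + c
      + d * (Real.log x : ℂ)) :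
    ∫ x in p..q, cross G S x =
      ((q : ℂ) * (starRingEnd ℂ) (s2 q) * G.f' q - (p : ℂ) * (starRingEnd ℂ) (s2 p) * G.f' p)
        - 4 * (starRingEnd ℂ) b * (G.f q - G.f p) := by
  have hsub : Icc p q ⊆ Ioi 0 := fun x hx => hp.trans_le hx.1
  have husub : uIcc p q ⊆ Ioi 0 := by rw [uIcc_of_le hpq.le]; exact hsub
  have hEq : EqOn s2 (P2 a b d) (Icc p q) := by
    refine EqOn.of_subset_closure (s := Ioo p q) (s2_eq S hds hp.le hS) (hc.mono hsub)
      ((cont_P2 a b d).mono hsub) Ioo_subset_Icc_self ?_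
    rw [closure_Ioo hpq.ne]
  set a' := (starRingEnd ℂ) a
  set b' := (starRingEnd ℂ) b
  set d' := (starRingEnd ℂ) d
  have hU1i : ∀ x ∈ Icc p q, IntervalIntegrable (U1 a' b' d') volume p x := fun x hx =>
    ((cont_U1 a' b' d').mono (by rw [uIcc_of_le hx.1]; exact (Icc_subset_Icc_right hx.2).trans hsub)
      ).intervalIntegrable
  have hG'i : IntervalIntegrable G.f' volume p q := (G.contDeriv.mono husub).intervalIntegrable
  have hGi := ii_of_locAC G hp hpq.le
  have hU : ∀ x ∈ Icc p q, (x : ℂ) * P2 a' b' d' x = (p : ℂ) * P2 a' b' d' p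
      + ∫ t in p..x, U1 a' b' d' t := by
    intro x hx
    rw [intervalIntegral.integral_eq_sub_of_hasDerivAt (f := fun x : ℝ => (x : ℂ) * P2 a' b' d' x)
      _ (hU1i x hx)]
    · ring
    · intro t ht
      rw [uIcc_of_le hx.1] at ht
      exact hasDeriv_U _ _ _ (hp.trans_le ht.1)
  have hibp := ibp hpq.le (hU1i q ⟨hpq.le, le_rfl⟩) hU hGi (G.locAC p q hp hpq.le).2
  have hG : ∫ t in p..q, G.f' t = G.f q - G.f p :=
    intervalIntegral.integral_eq_sub_of_hasDerivAt (fun t ht => G.hasDeriv t (husub ht)) hG'i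
  have hUc : ContinuousOn (fun x : ℝ => (x : ℂ) * P2 a' b' d' x) (uIcc p q) :=
    (Complex.continuous_ofReal.continuousOn.mul (cont_P2 a' b' d')).mono husub
  have hI1 : IntervalIntegrable (fun x : ℝ => (x : ℂ) * P2 a' b' d' x * G.f'' x
      + U1 a' b' d' x * G.f' x) volume p q :=
    (hGi.continuousOn_mul hUc).add
      (hG'i.continuousOn_mul ((cont_U1 a' b' d').mono husub))
  have hz' : ∀ᵐ x : ℝ, x ≠ q := by simp [ae_iff, measure_singleton]
  have hcongr : ∫ x in p..q, cross G S x
      = ∫ x in p..q, (((x : ℂ) * P2 a' b' d' x * G.f'' x + U1 a' b' d' x * G.f' x)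
        - 4 * b' * G.f' x) := by
    refine intervalIntegral.integral_congr_ae ?_
    filter_upwards [ae_deriv_of_primitive hpq.le (ii_of_locAC S hp hpq.le)
      (S.locAC p q hp hpq.le).2, hz'] with x hx hxq hxI
    rw [uIoc_of_le hpq.le] at hxI
    have hxI' : x ∈ Ioo p q := ⟨hxI.1, lt_of_le_of_ne hxI.2 hxq⟩
    have hx0 : 0 < x := hp.trans hxI.1
    have hxc : (x : ℂ) ≠ 0 := by exact_mod_cast hx0.ne'
    have e2 : S.f'' x = P2 a b d x := by
      rw [(hx hxI').unique (hds x hx0)]; exact hEq (Ioo_subset_Icc_self hxI')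
    have e1 := S1_eq S hp.le hS x hxI'
    unfold cross
    rw [e1, e2, conj_P1, conj_P2]
    unfold P1 U1
    field_simp
    ring
  rw [hcongr, intervalIntegral.integral_sub hI1 (hG'i.const_mul _), hibp,
    intervalIntegral.integral_const_mul, hG, hEq ⟨le_rfl, hpq.le⟩, hEq ⟨hpq.le, le_rfl⟩,
    conj_P2, conj_P2]

end BLAux
namespace BLAux

lemma exists_s2 (S : Lambda0) (h : ContDiffOn ℝ 2 S.f (Ioi 0)) :
    ∃ s2 : ℝ → ℂ, ContinuousOn s2 (Ioi 0) ∧ ∀ x, 0 < x → HasDerivAt S.f' (s2 x) x := by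
  have h' : ContDiffOn ℝ (1 + 1) S.f (Ioi 0) := by
    convert h using 1; norm_num
  have h1 := ((contDiffOn_succ_iff_deriv_of_isOpen isOpen_Ioi).1 h').2.2
  have h2 : ContDiffOn ℝ 1 S.f' (Ioi 0) := h1.congr fun x hx => (S.hasDeriv x hx).deriv.symm
  refine ⟨deriv S.f', h2.continuousOn_deriv_of_isOpen isOpen_Ioi le_rfl, fun x hx => ?_⟩
  exact ((h2.differentiableOn (by norm_num)).differentiableAt (Ioi_mem_nhds hx)).hasDerivAt

lemma lim_zero (G : Lambda0) (a b : ℂ) :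
    Tendsto (fun x : ℝ => (x : ℂ) * P2 a b 0 x * G.f' x) (nhdsWithin 0 (Ioi 0)) (nhds 0) := by
  set C := ‖G.f' 1‖ + energySq G.f' G.f''
  have hl0 : Tendsto (fun x : ℝ => x) (nhdsWithin 0 (Ioi 0)) (nhds 0) :=
    tendsto_nhdsWithin_of_tendsto_nhds tendsto_id
  have hl1 : Tendsto (fun x : ℝ => x * |Real.log x|) (nhdsWithin 0 (Ioi 0)) (nhds 0) := by
    have h := (tendsto_log_mul_rpow_nhdsGT_zero one_pos).abs
    rw [abs_zero] at h
    refine h.congr' ?_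
    filter_upwards [self_mem_nhdsWithin] with x hx
    have hx : 0 < x := hx
    rw [Real.rpow_one, abs_mul, abs_of_pos hx, mul_comm]
  have hl2 : Tendsto (fun x : ℝ => x * |Real.log x| ^ 2) (nhdsWithin 0 (Ioi 0)) (nhds 0) := by
    have h := (tendsto_log_mul_rpow_nhdsGT_zero (show (0:ℝ) < 1 / 2 by norm_num)).pow 2
    rw [zero_pow two_ne_zero] at h
    refine h.congr' ?_
    filter_upwards [self_mem_nhdsWithin] with x hx
    have hx : 0 < x := hx
    rw [mul_pow, ← Real.sqrt_eq_rpow, Real.sq_sqrt hx.le, sq_abs, mul_comm]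
  have hlim : Tendsto (fun x : ℝ => (2 * ‖a‖ + 3 * ‖b‖) * C * x
      + (2 * ‖a‖ + 3 * ‖b‖ + 2 * ‖b‖ * C) * (x * |Real.log x|)
      + 2 * ‖b‖ * (x * |Real.log x| ^ 2)) (nhdsWithin 0 (Ioi 0)) (nhds 0) := by
    simpa using ((hl0.const_mul ((2 * ‖a‖ + 3 * ‖b‖) * C)).add
      (hl1.const_mul (2 * ‖a‖ + 3 * ‖b‖ + 2 * ‖b‖ * C))).add (hl2.const_mul (2 * ‖b‖))
  refine squeeze_zero_norm' ?_ hlim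
  filter_upwards [self_mem_nhdsWithin] with x hx
  have hx : 0 < x := hx
  have hP : ‖P2 a b 0 x‖ ≤ 2 * ‖a‖ + ‖b‖ * (2 * |Real.log x| + 3) := by
    unfold P2
    rw [zero_mul, sub_zero]
    refine (norm_add_le _ _).trans ?_
    rw [norm_mul, norm_mul, Complex.norm_two]
    gcongr
    refine (norm_add_le _ _).trans ?_
    rw [norm_mul, Complex.norm_two, Complex.norm_real, Real.norm_eq_abs]
    simp
  have hg := growth' G hx
  rw [norm_mul, norm_mul, Complex.norm_real, Real.norm_of_nonneg hx.le]
  calc x * ‖P2 a b 0 x‖ * ‖G.f' x‖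
      ≤ x * (2 * ‖a‖ + ‖b‖ * (2 * |Real.log x| + 3)) * (C + |Real.log x|) := by gcongr
    _ = _ := by ring

lemma lim_infty (G : Lambda0) (d : ℂ) :
    Tendsto (fun x : ℝ => (x : ℂ) * P2 0 0 d x * G.f' x) atTop (nhds 0) := by
  set C := ‖G.f' 1‖ + energySq G.f' G.f''
  have hl0 : Tendsto (fun x : ℝ => x⁻¹) atTop (nhds 0) := tendsto_inv_atTop_zero
  have hl1 : Tendsto (fun x : ℝ => |Real.log x / x|) atTop (nhds 0) := by
    have h := (Real.isLittleO_log_id_atTop.tendsto_div_nhds_zero).abs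
    simpa using h
  have hlim : Tendsto (fun x : ℝ => ‖d‖ * C * x⁻¹ + ‖d‖ * |Real.log x / x|) atTop (nhds 0) := by
    simpa using (hl0.const_mul (‖d‖ * C)).add (hl1.const_mul ‖d‖)
  refine squeeze_zero_norm' ?_ hlim
  filter_upwards [eventually_gt_atTop 0] with x hx
  have hg := growth' G hx
  have hP : ‖P2 0 0 d x‖ = ‖d‖ * (x⁻¹) ^ 2 := by
    simp [P2, abs_of_pos hx]
  rw [norm_mul, norm_mul, Complex.norm_real, Real.norm_of_nonneg hx.le, hP, abs_div, abs_of_pos hx]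
  calc x * (‖d‖ * (x⁻¹) ^ 2) * ‖G.f' x‖ ≤ x * (‖d‖ * (x⁻¹) ^ 2) * (C + |Real.log x|) := by gcongr
    _ = _ := by field_simp

lemma cross_ii (G S : Lambda0) {a b : ℝ} (ha : 0 < a) (hb : 0 < b) :
    IntervalIntegrable (cross G S) volume a b := by
  rw [intervalIntegrable_iff]
  refine (cross_integrable G S).mono_set fun x hx => ?_
  exact lt_of_lt_of_le (lt_min ha hb) hx.1.le

lemma orthogonal (n : ℕ) (r : ℕ → ℝ) (hn : 1 ≤ n) (hpos : 0 < r 1)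
    (hmono : ∀ j, 1 ≤ j → j < n → r j < r (j + 1))
    (S G : Lambda0) (hS : IsBLSpline n r S.f)
    (hGv : ∀ j, 1 ≤ j → j ≤ n → G.f (r j) = 0)
    (hG0 : Tendsto G.f (nhdsWithin 0 (Ioi 0)) (nhds 0)) :
    ∫ x in Ioi (0:ℝ), cross G S x = 0 := by
  obtain ⟨s2, hc, hds⟩ := exists_s2 S hS.smooth
  set B : ℝ → ℂ := fun x => (x : ℂ) * (starRingEnd ℂ) (s2 x) * G.f' x with hB
  have hmid : ∀ k, 1 ≤ k → k ≤ n → 0 < r k ∧ ∫ x in (r 1)..(r k), cross G S x = B (r k) - B (r 1) := by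
    intro k hk
    induction k, hk using Nat.le_induction with
    | base => intro _; exact ⟨hpos, by simp⟩
    | succ k hk ih =>
      intro hkn
      obtain ⟨h0, hI⟩ := ih (by omega)
      have hlt := hmono k hk (by omega)
      have h1 : 0 < r (k + 1) := h0.trans hlt
      refine ⟨h1, ?_⟩
      obtain ⟨a, b, c, d, hP⟩ := hS.pieces k hk hkn
      have := piece G S hc hds h0 hlt hP
      rw [hGv k hk (by omega), hGv (k + 1) (by omega) hkn] at this
      rw [← intervalIntegral.integral_add_adjacent_intervals (cross_ii G S hpos h0)
        (cross_ii G S h0 h1), hI, this]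
      simp only [hB]; ring
  obtain ⟨hn0, hIn⟩ := hmid n hn le_rfl
  -- the unbounded piece
  have hright : ∫ x in Ioi (r 1), cross G S x = - B (r 1) := by
    obtain ⟨c, d, hR⟩ := hS.right
    have hR' : ∀ q, ∀ x ∈ Ioo (r n) q, S.f x = 0 * (x : ℂ) ^ 2
        + 0 * (x : ℂ) ^ 2 * (Real.log x : ℂ) + c + d * (Real.log x : ℂ) := by
      intro q x hx; rw [hR x hx.1]; ring
    have t1 := intervalIntegral_tendsto_integral_Ioi (r 1)
      ((cross_integrable G S).mono_set (Ioi_subset_Ioi hpos.le)) tendsto_id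
    refine tendsto_nhds_unique t1 ?_
    have hBlim : Tendsto B atTop (nhds 0) := by
      refine (lim_infty G (starRingEnd ℂ d)).congr' ?_
      filter_upwards [eventually_gt_atTop (r n)] with x hx
      have := s2_eq S hds hn0.le (hR' (x + 1)) x ⟨hx, by linarith⟩
      simp only [hB]
      rw [this, conj_P2, map_zero]
    have := hBlim.sub_const (B (r 1))
    rw [zero_sub] at this
    refine this.congr' ?_
    filter_upwards [eventually_gt_atTop (r n)] with q hq
    have hpc := piece G S hc hds hn0 hq (hR' q)
    rw [map_zero] at hpc
    simp only [id]
    rw [← intervalIntegral.integral_add_adjacent_intervals (cross_ii G S hpos hn0)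
        (cross_ii G S hn0 (hn0.trans hq)), hIn, hpc]
    simp only [hB]; ring
  -- the piece near the origin
  have hleft : ∫ x in Ioc 0 (r 1), cross G S x = B (r 1) := by
    obtain ⟨a, b, c, hL⟩ := hS.left
    have hL' : ∀ p, 0 ≤ p → ∀ x ∈ Ioo p (r 1), S.f x = a * (x : ℂ) ^ 2
        + b * (x : ℂ) ^ 2 * (Real.log x : ℂ) + c + 0 * (Real.log x : ℂ) := by
      intro p hp x hx; rw [hL x ⟨hp.trans_lt hx.1, hx.2⟩]; ring
    have hint : IntegrableOn (cross G S) (Ioc 0 (r 1)) :=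
      (cross_integrable G S).mono_set Ioc_subset_Ioi_self
    have hid : Tendsto (fun x : ℝ => x) (nhdsWithin 0 (Ioi 0)) (nhds 0) :=
      tendsto_nhdsWithin_of_tendsto_nhds tendsto_id
    have t1 := (aecover_Ioc_of_Ioc (μ := volume) hid (tendsto_const_nhds (x := r 1))
      ).integral_tendsto_of_countably_generated hint
    refine tendsto_nhds_unique t1 ?_
    have hBlim : Tendsto B (nhdsWithin 0 (Ioi 0)) (nhds 0) := by
      refine (lim_zero G (starRingEnd ℂ a) (starRingEnd ℂ b)).congr' ?_
      filter_upwards [Ioo_mem_nhdsGT hpos] with x hx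
      have := s2_eq S hds le_rfl (hL' 0 le_rfl) x hx
      simp only [hB]
      rw [this, conj_P2, map_zero]
    have := (hBlim.const_sub (B (r 1))).add (hG0.const_mul (4 * starRingEnd ℂ b))
    rw [sub_zero, mul_zero, add_zero] at this
    refine this.congr' ?_
    filter_upwards [Ioo_mem_nhdsGT hpos] with x hx
    have hpc := piece G S hc hds hx.1 hx.2 (hL' x hx.1.le)
    rw [hGv 1 le_rfl hn, intervalIntegral.integral_of_le hx.2.le] at hpc
    rw [Measure.restrict_restrict measurableSet_Ioc,
      inter_eq_left.2 (Ioc_subset_Ioc_left hx.1.le), hpc]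
    simp only [hB]; ring
  have hsplit : Ioi (0:ℝ) = Ioc 0 (r 1) ∪ Ioi (r 1) := (Ioc_union_Ioi_eq_Ioi hpos.le).symm
  rw [hsplit, setIntegral_union (Ioc_disjoint_Ioi le_rfl) measurableSet_Ioi
    ((cross_integrable G S).mono_set Ioc_subset_Ioi_self)
    ((cross_integrable G S).mono_set (Ioi_subset_Ioi hpos.le)), hleft, hright]
  ring

end BLAux

/-- variational characterization of `σ^A`: any `f ∈ Λ₀` matching the data
`ν j` at the knots and `α` at `0`, and different from `σ^A`, has strictly larger
seminorm. -/
theorem stmt6 (n : ℕ) (r : ℕ → ℝ) (hn : 1 ≤ n) (hpos : 0 < r 1)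
    (hmono : ∀ j, 1 ≤ j → j < n → r j < r (j + 1))
    (α : ℝ) (ν : ℕ → ℝ) (S F : Lambda0)
    (hS : IsBLSpline n r S.f)
    (hSv : ∀ j, 1 ≤ j → j ≤ n → S.f (r j) = (ν j : ℂ))
    (hS0 : S.f 0 = (α : ℂ))
    (hFv : ∀ j, 1 ≤ j → j ≤ n → F.f (r j) = (ν j : ℂ))
    (hF0 : Filter.Tendsto F.f (nhdsWithin 0 (Set.Ioi 0)) (nhds (α : ℂ)))
    (hne : ¬ Set.EqOn F.f S.f (Set.Ioi 0)) :
    S.seminorm0 < F.seminorm0 := by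
  have hS0' : Tendsto S.f (nhdsWithin 0 (Ioi 0)) (nhds (α : ℂ)) := by
    rw [← hS0]
    exact hS.cont0.mono_left (nhdsWithin_mono 0 Ioi_subset_Ici_self)
  have horth := BLAux.orthogonal n r hn hpos hmono S (BLAux.sub F S) hS
    (fun j h1 h2 => by simp [BLAux.sub, hFv j h1 h2, hSv j h1 h2])
    (by simpa [BLAux.sub] using hF0.sub hS0')
  have hexp := BLAux.energy_expand F S
  rw [horth] at hexp
  have hpos' : 0 < energySq (BLAux.sub F S).f' (BLAux.sub F S).f'' := by
    refine BLAux.energy_pos _ hpos (by simp [BLAux.sub, hFv 1 le_rfl hn, hSv 1 le_rfl hn]) ?_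
    simp only [EqOn, not_forall] at hne
    obtain ⟨x, hx, hxne⟩ := hne
    exact ⟨x, hx, by simpa [BLAux.sub, sub_eq_zero] using hxne⟩
  unfold Lambda0.seminorm0
  refine Real.sqrt_lt_sqrt ?_ ?_
  · refine setIntegral_nonneg measurableSet_Ioi fun x hx => ?_
    exact BLAux.dens_nonneg S hx
  · simp at hexp
    linarith
end
end

section
/- Variational characterization of σ^B: let ν₁, …, ν_n be real values and let σ^B be the unique non-singular Beppo Levi L₀-spline on ρ with σ^B(r_j) = ν_j for all j. If f ∈ Λ₀ satisfies f(r_j) = ν_j for all j ∈ {1,…,n} and f ≠ σ^B, then ‖σ^B‖₀ < ‖f‖₀. -/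
open MeasureTheory Set Filter

noncomputable section

/-- Real-valued version of the energy space. -/
structure RBeppo (f f' f'' : ℝ → ℝ) : Prop where
  hasDeriv : ∀ r ∈ Set.Ioi (0:ℝ), HasDerivAt f (f' r) r
  contDeriv : ContinuousOn f' (Set.Ioi 0)
  locInt : ∀ a b : ℝ, 0 < a → a ≤ b → IntervalIntegrable f'' volume a b
  ftc : ∀ a b : ℝ, 0 < a → a ≤ b → f' b = f' a + ∫ t in a..b, f'' t
  energyFin : MeasureTheory.IntegrableOn
    (fun r : ℝ => r * f'' r ^ 2 + (1 / r) * f' r ^ 2) (Set.Ioi 0)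

theorem RBeppo.meas {f f' f'' : ℝ → ℝ} (h : RBeppo f f' f'') :
    AEStronglyMeasurable f'' (volume.restrict (Ioi 0)) := by
  apply LocallyIntegrableOn.aestronglyMeasurable
  intro x hx
  have hx : 0 < x := hx
  refine ⟨Ioc (x/2) (2*x), mem_nhdsWithin_of_mem_nhds
    (Ioc_mem_nhds (by linarith) (by linarith)), ?_⟩
  exact (intervalIntegrable_iff_integrableOn_Ioc_of_le (by linarith)).1
    (h.locInt (x/2) (2*x) (by linarith) (by linarith))

theorem RBeppo.meas' {f f' f'' : ℝ → ℝ} (h : RBeppo f f' f'') :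
    AEStronglyMeasurable f' (volume.restrict (Ioi 0)) :=
  h.contDeriv.aestronglyMeasurable measurableSet_Ioi

theorem cross_meas {f f' f'' g g' g'' : ℝ → ℝ} (h : RBeppo f f' f'') (k : RBeppo g g' g'') :
    AEStronglyMeasurable (fun r : ℝ => r * (f'' r * g'' r) + (1 / r) * (f' r * g' r))
      (volume.restrict (Ioi 0)) := by
  refine AEStronglyMeasurable.add ?_ ?_
  · exact (measurable_id.aestronglyMeasurable).mul (h.meas.mul k.meas)
  · have : Measurable (fun r : ℝ => 1 / r) := by fun_prop
    exact (this.aestronglyMeasurable).mul (h.meas'.mul k.meas')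

theorem cross_bound (r a b c d : ℝ) (hr : 0 < r) :
    |r * (a * b) + (1 / r) * (c * d)| ≤
      (r * a ^ 2 + (1 / r) * c ^ 2) + (r * b ^ 2 + (1 / r) * d ^ 2) := by
  have h1 : 0 < 1 / r := by positivity
  rw [abs_le]
  constructor <;> nlinarith [mul_nonneg hr.le (sq_nonneg (a + b)), mul_nonneg hr.le (sq_nonneg (a - b)),
    mul_nonneg h1.le (sq_nonneg (c + d)), mul_nonneg h1.le (sq_nonneg (c - d)),
    mul_nonneg hr.le (sq_nonneg a), mul_nonneg hr.le (sq_nonneg b),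
    mul_nonneg h1.le (sq_nonneg c), mul_nonneg h1.le (sq_nonneg d)]

theorem cross_integrable {f f' f'' g g' g'' : ℝ → ℝ} (h : RBeppo f f' f'') (k : RBeppo g g' g'') :
    IntegrableOn (fun r : ℝ => r * (f'' r * g'' r) + (1 / r) * (f' r * g' r)) (Ioi 0) := by
  refine Integrable.mono' (h.energyFin.add k.energyFin) (cross_meas h k) ?_
  filter_upwards [ae_restrict_mem measurableSet_Ioi] with r hr
  exact cross_bound r _ _ _ _ hr

theorem RBeppo.sub {f f' f'' g g' g'' : ℝ → ℝ} (h : RBeppo f f' f'') (k : RBeppo g g' g'') :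
    RBeppo (fun x => f x - g x) (fun x => f' x - g' x) (fun x => f'' x - g'' x) where
  hasDeriv r hr := (h.hasDeriv r hr).sub (k.hasDeriv r hr)
  contDeriv := h.contDeriv.sub k.contDeriv
  locInt a b ha hab := (h.locInt a b ha hab).sub (k.locInt a b ha hab)
  ftc a b ha hab := by
    rw [intervalIntegral.integral_sub (h.locInt a b ha hab) (k.locInt a b ha hab),
      h.ftc a b ha hab, k.ftc a b ha hab]
    ring
  energyFin := by
    have := (h.energyFin.add k.energyFin).sub ((cross_integrable h k).const_mul 2)
    refine this.congr ?_
    filter_upwards with r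
    simp only [Pi.add_apply, Pi.sub_apply]
    ring

/-- Product rule for indefinite integrals. -/
theorem prod_ftc {u u' v v' : ℝ → ℝ} {a b : ℝ} (hab : a ≤ b)
    (hu' : IntervalIntegrable u' volume a b) (hv' : IntervalIntegrable v' volume a b)
    (hu : ∀ x ∈ Icc a b, u x = u a + ∫ t in a..x, u' t)
    (hv : ∀ x ∈ Icc a b, v x = v a + ∫ t in a..x, v' t) :
    ∫ x in a..b, (u' x * v x + u x * v' x) = u b * v b - u a * v a := by
  have haa : a ∈ uIcc a b := by simp
  have key : ∀ {w w' : ℝ → ℝ}, IntervalIntegrable w' volume a b →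
      AbsolutelyContinuousOnInterval (fun x => w a + ∫ t in a..x, w' t) a b := by
    intro w w' hw
    have h1 : AbsolutelyContinuousOnInterval (fun _ : ℝ => w a) a b :=
      (LipschitzWith.const (w a)).lipschitzOnWith.absolutelyContinuousOnInterval
    exact h1.add (hw.absolutelyContinuousOnInterval_intervalIntegral haa)
  have main := (key (w := u) hu').integral_deriv_mul_eq_sub (key (w := v) hv')
  have hbb : b ∈ Icc a b := ⟨hab, le_rfl⟩
  simp only [← hu b hbb, ← hv b hbb, intervalIntegral.integral_same, add_zero] at main
  rw [← main]
  apply intervalIntegral.integral_congr_ae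
  filter_upwards [hu'.ae_hasDerivAt_integral, hv'.ae_hasDerivAt_integral] with x h1 h2 hx
  have hx' : x ∈ uIcc a b := uIoc_subset_uIcc hx
  have hx'' : x ∈ Icc a b := by rwa [uIcc_of_le hab] at hx'
  have d1 := ((h1 hx' a haa).const_add (u a)).deriv
  have d2 := ((h2 hx' a haa).const_add (v a)).deriv
  rw [d1, d2, ← hu x hx'', ← hv x hx'']

theorem RBeppo.bdd {f f' f'' : ℝ → ℝ} (h : RBeppo f f' f'') :
    ∃ M, ∀ x, 0 < x → |f' x| ≤ M := by
  set E := ∫ r in Ioi (0:ℝ), (r * f'' r ^ 2 + (1 / r) * f' r ^ 2) with hE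
  have key : ∀ a b, 0 < a → a ≤ b → |f' b ^ 2 - f' a ^ 2| ≤ E := by
    intro a b ha hab
    have hp := prod_ftc hab (h.locInt a b ha hab) (h.locInt a b ha hab)
      (fun x hx => h.ftc a x ha hx.1) (fun x hx => h.ftc a x ha hx.1)
    have e : f' b ^ 2 - f' a ^ 2 = ∫ x in a..b, (f'' x * f' x + f' x * f'' x) := by
      rw [hp]; ring
    rw [e, ← Real.norm_eq_abs, intervalIntegral.integral_of_le hab]
    refine (norm_integral_le_integral_norm _).trans ?_
    have hsub : Ioc a b ⊆ Ioi (0:ℝ) := fun x hx => lt_trans ha hx.1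
    have hpos : ∀ r : ℝ, 0 < r → ‖f'' r * f' r + f' r * f'' r‖ ≤ r * f'' r ^ 2 + (1 / r) * f' r ^ 2 := by
      intro r hr
      have e1 : r * f'' r ^ 2 + (1 / r) * f' r ^ 2 - (f'' r * f' r + f' r * f'' r)
          = (1/r) * (r * f'' r - f' r)^2 := by field_simp; ring
      have e2 : r * f'' r ^ 2 + (1 / r) * f' r ^ 2 + (f'' r * f' r + f' r * f'' r)
          = (1/r) * (r * f'' r + f' r)^2 := by field_simp; ring
      have p1 : 0 ≤ (1/r) * (r * f'' r - f' r)^2 := by positivity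
      have p2 : 0 ≤ (1/r) * (r * f'' r + f' r)^2 := by positivity
      rw [Real.norm_eq_abs, abs_le]
      constructor <;> linarith
    calc ∫ r in Ioc a b, ‖f'' r * f' r + f' r * f'' r‖
        ≤ ∫ r in Ioc a b, (r * f'' r ^ 2 + (1 / r) * f' r ^ 2) := by
          refine integral_mono_of_nonneg ?_ (h.energyFin.mono_set hsub) ?_
          · filter_upwards with r using norm_nonneg _
          · filter_upwards [ae_restrict_mem measurableSet_Ioc] with r hr using hpos r (hsub hr)
      _ ≤ E := by
          refine setIntegral_mono_set h.energyFin ?_ hsub.eventuallyLE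
          filter_upwards [ae_restrict_mem measurableSet_Ioi] with r hr
          have hr : 0 < r := hr
          show 0 ≤ _
          positivity
  refine ⟨1 + (E + f' 1 ^ 2), fun x hx => ?_⟩
  have : f' x ^ 2 ≤ E + f' 1 ^ 2 := by
    rcases le_total x 1 with h1 | h1
    · have := key x 1 hx h1
      rw [abs_le] at this; linarith
    · have := key 1 x one_pos h1
      rw [abs_le] at this; linarith
  nlinarith [sq_abs (f' x), sq_nonneg (|f' x| - 1)]

theorem RBeppo.energy_zero {f f' f'' : ℝ → ℝ} (h : RBeppo f f' f'')
    (h0 : ∫ r in Ioi (0:ℝ), (r * f'' r ^ 2 + (1 / r) * f' r ^ 2) ≤ 0) :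
    ∀ x, 0 < x → ∀ y, 0 < y → f x = f y := by
  have hnn : ∀ᵐ r ∂(volume.restrict (Ioi (0:ℝ))), 0 ≤ r * f'' r ^ 2 + (1 / r) * f' r ^ 2 := by
    filter_upwards [ae_restrict_mem measurableSet_Ioi] with r hr
    have hr : 0 < r := hr
    positivity
  have h1 := (integral_eq_zero_iff_of_nonneg_ae hnn h.energyFin).1
    (le_antisymm h0 (integral_nonneg_of_ae hnn))
  have h2 : f' =ᵐ[volume.restrict (Ioi (0:ℝ))] fun _ => 0 := by
    filter_upwards [h1, ae_restrict_mem measurableSet_Ioi] with r hr hr0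
    have hr0 : 0 < r := hr0
    simp only [Pi.zero_apply] at hr
    have p1 : 0 ≤ r * f'' r ^ 2 := by positivity
    have p2 : 0 ≤ (1/r) * f' r ^ 2 := by positivity
    have p3 : (1/r) * f' r ^ 2 = 0 := by linarith
    have : (1/r) ≠ 0 := by positivity
    simpa [hr0.ne'] using p3
  have h3 : EqOn f' (fun _ => 0) (Ioi 0) :=
    MeasureTheory.Measure.eqOn_open_of_ae_eq h2 isOpen_Ioi h.contDeriv continuousOn_const
  intro x hx y hy
  refine isOpen_Ioi.is_const_of_deriv_eq_zero (s := Ioi (0:ℝ)) (convex_Ioi _).isPreconnected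
    (fun z hz => (h.hasDeriv z hz).differentiableAt.differentiableWithinAt)
    (fun z hz => ?_) hx hy
  rw [(h.hasDeriv z hz).deriv, h3 hz]; rfl

theorem RBeppo.energy_nonneg {f' f'' : ℝ → ℝ} :
    0 ≤ ∫ r in Ioi (0:ℝ), (r * f'' r ^ 2 + (1 / r) * f' r ^ 2) := by
  refine setIntegral_nonneg measurableSet_Ioi fun r hr => ?_
  have hr : 0 < r := hr
  positivity

/-- The Euler-Lagrange identity on one piece. -/
theorem piece_deriv_s7 {s s' s2 : ℝ → ℝ} {U : Set ℝ} (hU : IsOpen U) (hU0 : U ⊆ Ioi 0)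
    (h1 : ∀ x ∈ Ioi (0:ℝ), HasDerivAt s (s' x) x) (h2 : ∀ x ∈ Ioi (0:ℝ), HasDerivAt s' (s2 x) x)
    {a b c d : ℝ} (hf : ∀ x ∈ U, s x = a * x ^ 2 + b * x ^ 2 * Real.log x + c + d * Real.log x) :
    ∀ x ∈ U, x * s2 x = 2 * a * x + b * (2 * x * Real.log x + 3 * x) - d / x ∧
      HasDerivAt (fun x => x * s2 x) (s' x / x + 4 * b) x := by
  have e1 : ∀ x ∈ U, s' x = 2 * a * x + b * (2 * x * Real.log x + x) + d / x := by
    intro x hx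
    have hx0 : x ≠ 0 := ne_of_gt (hU0 hx)
    have hl := Real.hasDerivAt_log hx0
    have hp : HasDerivAt (fun x : ℝ => x ^ 2) (2 * x) x := by simpa using hasDerivAt_pow 2 x
    have H := (((hp.const_mul a).add ((hp.const_mul b).mul hl)).add_const c).add (hl.const_mul d)
    have H2 := H.congr_of_eventuallyEq (f₁ := s) (by
      filter_upwards [hU.mem_nhds hx] with y hy
      rw [hf y hy]; rfl)
    rw [(h1 x (hU0 hx)).unique H2]
    field_simp
  have e2 : ∀ x ∈ U, x * s2 x = 2 * a * x + b * (2 * x * Real.log x + 3 * x) - d / x := by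
    intro x hx
    have hx0 : x ≠ 0 := ne_of_gt (hU0 hx)
    have hl := Real.hasDerivAt_log hx0
    have hi := hasDerivAt_id x
    have H := (((hi.const_mul (2*a)).add ((((hi.const_mul 2).mul hl).add hi).const_mul b))).add
      ((hasDerivAt_inv hx0).const_mul d)
    have H2 := H.congr_of_eventuallyEq (f₁ := s') (by
      filter_upwards [hU.mem_nhds hx] with y hy
      rw [e1 y hy]; simp [div_eq_mul_inv])
    rw [(h2 x (hU0 hx)).unique H2]
    simp only [id]
    field_simp
    ring
  intro x hx
  refine ⟨e2 x hx, ?_⟩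
  have hx0 : x ≠ 0 := ne_of_gt (hU0 hx)
  have hl := Real.hasDerivAt_log hx0
  have hi := hasDerivAt_id x
  have H := (((hi.const_mul (2*a)).add ((((hi.const_mul 2).mul hl).add (hi.const_mul 3)).const_mul b))).sub
    ((hasDerivAt_inv hx0).const_mul d)
  have H2 := H.congr_of_eventuallyEq (f₁ := fun x => x * s2 x) (by
      filter_upwards [hU.mem_nhds hx] with y hy
      rw [e2 y hy]; simp [div_eq_mul_inv])
  have e3 : s' x / x + 4 * b =
      2 * a * 1 + b * (2 * 1 * Real.log x + 2 * id x * x⁻¹ + 3 * 1) - d * -(x ^ 2)⁻¹ := by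
    rw [e1 x hx]
    simp only [id]
    field_simp
    ring
  rw [e3]
  exact H2

/-- Integration by parts on one piece. -/
theorem piece_ibp {s s' s'' s2 g g' g'' : ℝ → ℝ} (hs : RBeppo s s' s'') (hg : RBeppo g g' g'')
    (hc : ContinuousOn s2 (Ioi 0)) (hae : ∀ᵐ x, x ∈ Ioi (0:ℝ) → s'' x = s2 x)
    {α β q : ℝ} (hα : 0 < α) (hαβ : α ≤ β)
    (hd : ∀ x ∈ Ioo α β, HasDerivAt (fun x => x * s2 x) (s' x / x + q) x)
    (hq : q * (g β - g α) = 0) :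
    ∫ r in α..β, (r * (s'' r * g'' r) + (1 / r) * (s' r * g' r)) =
      β * s2 β * g' β - α * s2 α * g' α := by
  have hsub : Icc α β ⊆ Ioi 0 := fun x hx => lt_of_lt_of_le hα hx.1
  have cφ : ContinuousOn (fun x => x * s2 x) (Icc α β) :=
    continuousOn_id.mul (hc.mono hsub)
  have cφ' : ContinuousOn (fun x => s' x / x + q) (Icc α β) :=
    ((hs.contDeriv.mono hsub).div continuousOn_id (fun x hx => ne_of_gt (hsub hx))).add
      continuousOn_const
  have iφ' : IntervalIntegrable (fun x => s' x / x + q) volume α β :=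
    ContinuousOn.intervalIntegrable (by rwa [uIcc_of_le hαβ])
  have cg' : ContinuousOn g' (uIcc α β) := by
    rw [uIcc_of_le hαβ]; exact hg.contDeriv.mono hsub
  have ig' : IntervalIntegrable g' volume α β := cg'.intervalIntegrable
  have hp := prod_ftc (u := fun x => x * s2 x) (v := g') hαβ iφ' (hg.locInt α β hα hαβ)
    (fun x hx => by
      have := intervalIntegral.integral_eq_sub_of_hasDerivAt_of_le hx.1
        (cφ.mono (Icc_subset_Icc_right hx.2)) (fun y hy => hd y ⟨hy.1, hy.2.trans_le hx.2⟩)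
        (iφ'.mono_set (by rw [uIcc_of_le hαβ, uIcc_of_le hx.1]; exact Icc_subset_Icc_right hx.2))
      rw [this]; ring)
    (fun x hx => hg.ftc α x hα hx.1)
  have hg0 : ∫ x in α..β, g' x = g β - g α :=
    intervalIntegral.integral_eq_sub_of_hasDerivAt
      (fun x hx => hg.hasDeriv x (hsub (by rwa [uIcc_of_le hαβ] at hx))) ig'
  have hI : IntervalIntegrable (fun x => (s' x / x + q) * g' x + x * s2 x * g'' x) volume α β := by
    refine (iφ'.mul_continuousOn cg').add ((hg.locInt α β hα hαβ).continuousOn_mul ?_)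
    rwa [uIcc_of_le hαβ]
  have e : ∫ r in α..β, (r * (s'' r * g'' r) + (1 / r) * (s' r * g' r)) =
      ∫ r in α..β, (((s' r / r + q) * g' r + r * s2 r * g'' r) - q * g' r) := by
    apply intervalIntegral.integral_congr_ae
    filter_upwards [hae] with x hx hx2
    rw [uIoc_of_le hαβ] at hx2
    rw [hx (lt_trans hα hx2.1)]
    ring
  rw [e, intervalIntegral.integral_sub hI (ig'.const_mul q), hp,
    intervalIntegral.integral_const_mul, hg0, hq]
  ring

theorem real_cross_zero (n : ℕ) (r : ℕ → ℝ) (hn : 1 ≤ n) (hpos : 0 < r 1)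
    (hmono : ∀ j, 1 ≤ j → j < n → r j < r (j + 1))
    {s s' s'' g g' g'' : ℝ → ℝ} (hs : RBeppo s s' s'') (hg : RBeppo g g' g'')
    (hsm : ContDiffOn ℝ 2 s (Ioi 0))
    (hp : ∀ j : ℕ, 1 ≤ j → j + 1 ≤ n → ∃ a b c d : ℝ, ∀ x ∈ Ioo (r j) (r (j + 1)),
      s x = a * x ^ 2 + b * x ^ 2 * Real.log x + c + d * Real.log x)
    (hl : ∃ a c : ℝ, ∀ x ∈ Ioo (0 : ℝ) (r 1), s x = a * x ^ 2 + c)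
    (hr : ∃ c d : ℝ, ∀ x ∈ Ioi (r n), s x = c + d * Real.log x)
    (hgz : ∀ j, 1 ≤ j → j ≤ n → g (r j) = 0) :
    ∫ r in Ioi (0:ℝ), (r * (s'' r * g'' r) + (1 / r) * (s' r * g' r)) = 0 := by
  set s2 := deriv s' with hs2
  have hderiv : EqOn (deriv s) s' (Ioi 0) := fun x hx => (hs.hasDeriv x hx).deriv
  have hs'C : ContDiffOn ℝ 1 s' (Ioi 0) := by
    have h1 : ContDiffOn ℝ 1 (deriv s) (Ioi 0) :=
      ((contDiffOn_succ_iff_deriv_of_isOpen (n := 1) isOpen_Ioi).1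
        (by simpa [one_add_one_eq_two] using hsm)).2.2
    exact h1.congr fun x hx => (hderiv hx).symm
  have hd2 : ∀ x ∈ Ioi (0:ℝ), HasDerivAt s' (s2 x) x := fun x hx =>
    ((hs'C.differentiableOn (by norm_num)).differentiableAt (isOpen_Ioi.mem_nhds hx)).hasDerivAt
  have hc : ContinuousOn s2 (Ioi 0) := hs'C.continuousOn_deriv_of_isOpen isOpen_Ioi (by norm_num)
  have hae : ∀ᵐ x, x ∈ Ioi (0:ℝ) → s'' x = s2 x := by
    have key : ∀ k : ℕ, ∀ᵐ x, x ∈ Ioo (1 / ((k:ℝ) + 1)) ((k:ℝ) + 1) → s'' x = s2 x := by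
      intro k
      have hk : (0:ℝ) < 1 / ((k:ℝ) + 1) := by positivity
      have hk2 : 1 / ((k:ℝ) + 1) ≤ (k:ℝ) + 1 := by
        have : (0:ℝ) ≤ k := by positivity
        rw [div_le_iff₀ (by positivity)]; nlinarith
      filter_upwards [(hs.locInt _ _ hk hk2).ae_hasDerivAt_integral] with x hx hxI
      have hx2 := hx (by rw [uIcc_of_le hk2]; exact Ioo_subset_Icc_self hxI) _ left_mem_uIcc
      have hx3 := (hx2.const_add (s' (1 / ((k:ℝ) + 1)))).congr_of_eventuallyEq (f₁ := s') (by
        filter_upwards [Ioi_mem_nhds hxI.1] with y hy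
        exact hs.ftc _ y hk (le_of_lt hy))
      exact hx3.unique (hd2 x (hk.trans hxI.1))
    rw [← ae_all_iff] at key
    filter_upwards [key] with x hx hx0
    have hx0 : 0 < x := hx0
    obtain ⟨k, hk⟩ := exists_nat_gt (max x (1/x))
    refine hx k ⟨?_, ?_⟩
    · rw [div_lt_iff₀ (by positivity)]
      have h2 := (le_max_right x (1/x)).trans_lt hk
      rw [div_lt_iff₀ hx0] at h2
      nlinarith
    · linarith [(le_max_left x (1/x)).trans_lt hk]
  have rpos : ∀ j, 1 ≤ j → j ≤ n → r 1 ≤ r j := by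
    intro j hj
    induction j, hj using Nat.le_induction with
    | base => intro _; exact le_rfl
    | succ j hj ih =>
      intro hjn
      exact (ih (by omega)).trans (hmono j hj (by omega)).le
  have cint : ∀ a b, 0 < a → a ≤ b → IntervalIntegrable
      (fun r => r * (s'' r * g'' r) + (1 / r) * (s' r * g' r)) volume a b := by
    intro a b ha hab
    rw [intervalIntegrable_iff_integrableOn_Ioc_of_le hab]
    exact (cross_integrable hs hg).mono_set fun x hx => lt_trans ha hx.1
  have mid : ∀ j, 1 ≤ j → j ≤ n →
      ∫ r in (r 1)..(r j), (r * (s'' r * g'' r) + (1 / r) * (s' r * g' r)) =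
      r j * s2 (r j) * g' (r j) - r 1 * s2 (r 1) * g' (r 1) := by
    intro j hj
    induction j, hj using Nat.le_induction with
    | base => intro _; simp
    | succ j hj ih =>
      intro hjn
      have hj0 : 0 < r j := hpos.trans_le (rpos j hj (by omega))
      have hjl := hmono j hj (by omega)
      obtain ⟨a, b, c, d, hf⟩ := hp j hj hjn
      have hpc := piece_deriv_s7 isOpen_Ioo (fun x hx => hj0.trans hx.1) hs.hasDeriv hd2 hf
      rw [← intervalIntegral.integral_add_adjacent_intervals
        (cint _ _ hpos (rpos j hj (by omega))) (cint _ _ hj0 hjl.le), ih (by omega),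
        piece_ibp hs hg hc hae hj0 hjl.le (fun x hx => (hpc x hx).2)
          (by rw [hgz j hj (by omega), hgz (j+1) (by omega) hjn]; ring)]
      ring
  obtain ⟨a, c, hl⟩ := hl
  obtain ⟨c', d, hr⟩ := hr
  have hrn : 0 < r n := hpos.trans_le (rpos n hn le_rfl)
  have hL := piece_deriv_s7 (a := a) (b := 0) (c := c) (d := 0) isOpen_Ioo
    (fun x (hx : x ∈ Ioo 0 (r 1)) => hx.1) hs.hasDeriv hd2 (fun x hx => by rw [hl x hx]; ring)
  have hR := piece_deriv_s7 (a := 0) (b := 0) (c := c') (d := d) isOpen_Ioi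
    (fun x (hx : x ∈ Ioi (r n)) => hrn.trans hx) hs.hasDeriv hd2 (fun x hx => by rw [hr x hx]; ring)
  have tot : ∀ ε N, 0 < ε → ε < r 1 → r n < N →
      ∫ r in ε..N, (r * (s'' r * g'' r) + (1 / r) * (s' r * g' r)) =
        - d / N * g' N - 2 * a * ε * g' ε := by
    intro ε N h0 h1 h2
    have i1 := piece_ibp hs hg hc hae (q := 0) h0 h1.le
      (fun x hx => by simpa using (hL x ⟨h0.trans hx.1, hx.2⟩).2) (by simp)
    have i2 := piece_ibp hs hg hc hae (q := 0) hrn h2.le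
      (fun x hx => by simpa using (hR x hx.1).2) (by simp)
    rw [← intervalIntegral.integral_add_adjacent_intervals (b := r 1)
        (cint _ _ h0 h1.le) (cint _ _ hpos ((rpos n hn le_rfl).trans h2.le)),
      ← intervalIntegral.integral_add_adjacent_intervals (b := r n)
        (cint _ _ hpos (rpos n hn le_rfl)) (cint _ _ hrn h2.le), i1, i2, mid n hn le_rfl,
      (hL ε ⟨h0, h1⟩).1, (hR N h2).1]
    ring
  obtain ⟨M, hM⟩ := hg.bdd
  have t1 : Tendsto (fun k : ℕ => 1 / ((k:ℝ) + 1)) atTop (nhds 0) :=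
    tendsto_one_div_add_atTop_nhds_zero_nat
  have t2 : Tendsto (fun k : ℕ => (k:ℝ) + 1) atTop atTop :=
    tendsto_atTop_add_const_right _ _ tendsto_natCast_atTop_atTop
  have cov : AECover (volume.restrict (Ioi (0:ℝ))) atTop
      (fun k : ℕ => Ioc (1 / ((k:ℝ) + 1)) ((k:ℝ) + 1)) :=
    (aecover_Ioi_of_Ioi t1).inter (aecover_Iic t2)
  have lim1 := cov.integral_tendsto_of_countably_generated (cross_integrable hs hg)
  have lim2 : Tendsto (fun k : ℕ => - d / ((k:ℝ) + 1) * g' ((k:ℝ) + 1)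
      - 2 * a * (1 / ((k:ℝ) + 1)) * g' (1 / ((k:ℝ) + 1))) atTop (nhds 0) := by
    refine squeeze_zero_norm (a := fun k : ℕ => (|d| * M + 2 * |a| * M) * (1 / ((k:ℝ) + 1))) ?_
      (by simpa using t1.const_mul (|d| * M + 2 * |a| * M))
    intro k
    have hk : (0:ℝ) < (k:ℝ) + 1 := by positivity
    have hk' : (0:ℝ) < 1 / ((k:ℝ) + 1) := by positivity
    have m1 := hM _ hk
    have m2 := hM _ hk'
    refine (norm_sub_le _ _).trans ?_
    simp only [norm_mul, Real.norm_eq_abs, norm_div, abs_neg, abs_of_pos hk, abs_one, abs_two]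
    have b1 : |d| / ((k:ℝ) + 1) * |g' ((k:ℝ) + 1)| ≤ |d| / ((k:ℝ) + 1) * M := by gcongr
    have b2 : 2 * |a| * (1 / ((k:ℝ) + 1)) * |g' (1 / ((k:ℝ) + 1))| ≤
      2 * |a| * (1 / ((k:ℝ) + 1)) * M := by gcongr
    calc _ ≤ |d| / ((k:ℝ) + 1) * M + 2 * |a| * (1 / ((k:ℝ) + 1)) * M := add_le_add b1 b2
      _ = _ := by ring
  refine tendsto_nhds_unique (lim1.congr' ?_) lim2
  filter_upwards [t1.eventually (gt_mem_nhds hpos), t2.eventually_gt_atTop (r n)] with k h1 h2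
  have hk' : (0:ℝ) < 1 / ((k:ℝ) + 1) := by positivity
  have hle : 1 / ((k:ℝ) + 1) ≤ (k:ℝ) + 1 := (h1.le.trans (rpos n hn le_rfl)).trans h2.le
  rw [← tot _ _ hk' h1 h2, intervalIntegral.integral_of_le hle,
    Measure.restrict_restrict measurableSet_Ioc,
    inter_eq_left.2 (show Ioc (1 / ((k:ℝ) + 1)) ((k:ℝ) + 1) ⊆ Ioi 0 from
      fun x hx => hk'.trans hx.1)]

theorem real_pythag (n : ℕ) (r : ℕ → ℝ) (hn : 1 ≤ n) (hpos : 0 < r 1)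
    (hmono : ∀ j, 1 ≤ j → j < n → r j < r (j + 1))
    {s s' s'' f f' f'' : ℝ → ℝ} (hs : RBeppo s s' s'') (hf : RBeppo f f' f'')
    (hsm : ContDiffOn ℝ 2 s (Ioi 0))
    (hp : ∀ j : ℕ, 1 ≤ j → j + 1 ≤ n → ∃ a b c d : ℝ, ∀ x ∈ Ioo (r j) (r (j + 1)),
      s x = a * x ^ 2 + b * x ^ 2 * Real.log x + c + d * Real.log x)
    (hl : ∃ a c : ℝ, ∀ x ∈ Ioo (0 : ℝ) (r 1), s x = a * x ^ 2 + c)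
    (hr : ∃ c d : ℝ, ∀ x ∈ Ioi (r n), s x = c + d * Real.log x)
    (hgz : ∀ j, 1 ≤ j → j ≤ n → f (r j) = s (r j)) :
    ∫ r in Ioi (0:ℝ), (r * f'' r ^ 2 + (1 / r) * f' r ^ 2) =
      (∫ r in Ioi (0:ℝ), (r * s'' r ^ 2 + (1 / r) * s' r ^ 2)) +
      ∫ r in Ioi (0:ℝ), (r * (f'' r - s'' r) ^ 2 + (1 / r) * (f' r - s' r) ^ 2) := by
  have hg := hf.sub hs
  have h0 := real_cross_zero n r hn hpos hmono hs hg hsm hp hl hr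
    (fun j h1 h2 => sub_eq_zero.2 (hgz j h1 h2))
  have ci := cross_integrable hs hg
  have e : ∫ r in Ioi (0:ℝ), (r * f'' r ^ 2 + (1 / r) * f' r ^ 2) =
      ∫ r in Ioi (0:ℝ), (((r * s'' r ^ 2 + (1 / r) * s' r ^ 2) +
        (r * (f'' r - s'' r) ^ 2 + (1 / r) * (f' r - s' r) ^ 2)) +
        2 * (r * (s'' r * (f'' r - s'' r)) + (1 / r) * (s' r * (f' r - s' r)))) := by
    congr 1; ext r; ring
  have i12 : Integrable (fun r : ℝ => (r * s'' r ^ 2 + (1 / r) * s' r ^ 2) +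
        (r * (f'' r - s'' r) ^ 2 + (1 / r) * (f' r - s' r) ^ 2)) (volume.restrict (Ioi 0)) :=
    hs.energyFin.add hg.energyFin
  rw [e, integral_add i12 (ci.const_mul 2),
    integral_add hs.energyFin hg.energyFin, integral_const_mul, h0]
  ring

/-- Applying a real-linear coordinate of norm at most one. -/
theorem Lambda0.coord (F : Lambda0) (L : ℂ →L[ℝ] ℝ) (hL : ∀ z, |L z| ≤ ‖z‖) :
    RBeppo (fun x => L (F.f x)) (fun x => L (F.f' x)) (fun x => L (F.f'' x)) := by
  have li : ∀ a b : ℝ, 0 < a → a ≤ b → IntervalIntegrable F.f'' volume a b := by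
    intro a b ha hab
    rw [intervalIntegrable_iff_integrableOn_Icc_of_le hab]
    exact (F.locAC a b ha hab).1
  have li2 : ∀ a b : ℝ, 0 < a → a ≤ b → IntervalIntegrable (fun x => L (F.f'' x)) volume a b := by
    intro a b ha hab
    rw [intervalIntegrable_iff_integrableOn_Icc_of_le hab]
    exact L.integrable_comp (F.locAC a b ha hab).1
  refine ⟨fun r hr => L.hasFDerivAt.comp_hasDerivAt r (F.hasDeriv r hr),
    L.continuous.comp_continuousOn F.contDeriv, li2, ?_, ?_⟩
  · intro a b ha hab
    rw [(F.locAC a b ha hab).2 b ⟨hab, le_rfl⟩, map_add,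
      ContinuousLinearMap.intervalIntegral_comp_comm L (li a b ha hab)]
  · have m2 : AEStronglyMeasurable (fun x => L (F.f'' x)) (volume.restrict (Ioi 0)) := by
      apply LocallyIntegrableOn.aestronglyMeasurable
      intro x hx
      have hx : 0 < x := hx
      refine ⟨Ioc (x/2) (2*x), mem_nhdsWithin_of_mem_nhds
        (Ioc_mem_nhds (by linarith) (by linarith)), ?_⟩
      exact (intervalIntegrable_iff_integrableOn_Ioc_of_le (by linarith)).1
        (li2 (x/2) (2*x) (by linarith) (by linarith))
    have m1 : AEStronglyMeasurable (fun x => L (F.f' x)) (volume.restrict (Ioi 0)) :=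
      (L.continuous.comp_continuousOn F.contDeriv).aestronglyMeasurable measurableSet_Ioi
    have minv : Measurable (fun r : ℝ => 1 / r) := by fun_prop
    refine Integrable.mono' F.energyFin
      (((measurable_id.aestronglyMeasurable).mul (m2.pow 2)).add
        ((minv.aestronglyMeasurable).mul (m1.pow 2))) ?_
    filter_upwards [ae_restrict_mem measurableSet_Ioi] with r hr
    have hr : 0 < r := hr
    have q : ∀ z, L z ^ 2 ≤ ‖z‖ ^ 2 := fun z => sq_le_sq' (by linarith [neg_abs_le (L z), hL z])
      (by linarith [le_abs_self (L z), hL z])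
    have q1 := q (F.f' r)
    have q2 := q (F.f'' r)
    show ‖r * L (F.f'' r) ^ 2 + (1 / r) * L (F.f' r) ^ 2‖ ≤ _
    rw [Real.norm_of_nonneg (by positivity)]
    gcongr

theorem Lambda0.energy_split (F : Lambda0) : energySq F.f' F.f'' =
    (∫ r in Ioi (0:ℝ), (r * (F.f'' r).re ^ 2 + (1 / r) * (F.f' r).re ^ 2)) +
    ∫ r in Ioi (0:ℝ), (r * (F.f'' r).im ^ 2 + (1 / r) * (F.f' r).im ^ 2) := by
  have h1 := (F.coord Complex.reCLM (fun z => Complex.abs_re_le_norm z)).energyFin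
  have h2 := (F.coord Complex.imCLM (fun z => Complex.abs_im_le_norm z)).energyFin
  simp only [Complex.reCLM_apply, Complex.imCLM_apply] at h1 h2
  rw [← integral_add h1 h2, energySq]
  congr 1
  ext r
  rw [Complex.sq_norm, Complex.sq_norm, Complex.normSq_apply, Complex.normSq_apply]
  ring

/-- variational characterization of `σ^B`: any `f ∈ Λ₀` matching the data
`ν j` at the knots and different from the non-singular interpolant `σ^B` has strictly
larger seminorm. -/
theorem stmt7 (n : ℕ) (r : ℕ → ℝ) (hn : 1 ≤ n) (hpos : 0 < r 1)
    (hmono : ∀ j, 1 ≤ j → j < n → r j < r (j + 1))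
    (ν : ℕ → ℝ) (S F : Lambda0)
    (hS : IsBLSpline n r S.f) (hns : NonSingularBLS (r 1) S.f)
    (hSv : ∀ j, 1 ≤ j → j ≤ n → S.f (r j) = (ν j : ℂ))
    (hFv : ∀ j, 1 ≤ j → j ≤ n → F.f (r j) = (ν j : ℂ))
    (hne : ¬ Set.EqOn F.f S.f (Set.Ioi 0)) :
    S.seminorm0 < F.seminorm0 := by
  have hF1 := F.coord Complex.reCLM (fun z => Complex.abs_re_le_norm z)
  have hF2 := F.coord Complex.imCLM (fun z => Complex.abs_im_le_norm z)
  have hS1 := S.coord Complex.reCLM (fun z => Complex.abs_re_le_norm z)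
  have hS2 := S.coord Complex.imCLM (fun z => Complex.abs_im_le_norm z)
  have hFS : ∀ j, 1 ≤ j → j ≤ n → F.f (r j) = S.f (r j) := fun j h1 h2 => by
    rw [hSv j h1 h2, hFv j h1 h2]
  obtain ⟨aL, cL, hleft⟩ := hns
  obtain ⟨cR, dR, hright⟩ := hS.right
  have p1 := real_pythag n r hn hpos hmono hS1 hF1
    (Complex.reCLM.contDiff.comp_contDiffOn hS.smooth)
    (fun j h1 h2 => by
      obtain ⟨a, b, c, d, h⟩ := hS.pieces j h1 h2
      refine ⟨a.re, b.re, c.re, d.re, fun x hx => ?_⟩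
      rw [h x hx]
      simp [← Complex.ofReal_pow])
    ⟨aL.re, cL.re, fun x hx => by rw [hleft x hx]; simp [← Complex.ofReal_pow]⟩
    ⟨cR.re, dR.re, fun x hx => by rw [hright x hx]; simp⟩
    (fun j h1 h2 => by rw [hFS j h1 h2])
  have p2 := real_pythag n r hn hpos hmono hS2 hF2
    (Complex.imCLM.contDiff.comp_contDiffOn hS.smooth)
    (fun j h1 h2 => by
      obtain ⟨a, b, c, d, h⟩ := hS.pieces j h1 h2
      refine ⟨a.im, b.im, c.im, d.im, fun x hx => ?_⟩
      rw [h x hx]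
      simp [← Complex.ofReal_pow])
    ⟨aL.im, cL.im, fun x hx => by rw [hleft x hx]; simp [← Complex.ofReal_pow]⟩
    ⟨cR.im, dR.im, fun x hx => by rw [hright x hx]; simp⟩
    (fun j h1 h2 => by rw [hFS j h1 h2])
  have z1 := (hF1.sub hS1).energy_zero
  have z2 := (hF2.sub hS2).energy_zero
  have n1 := RBeppo.energy_nonneg (f' := fun x => (F.f' x).re - (S.f' x).re)
    (f'' := fun x => (F.f'' x).re - (S.f'' x).re)
  have n2 := RBeppo.energy_nonneg (f' := fun x => (F.f' x).im - (S.f' x).im)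
    (f'' := fun x => (F.f'' x).im - (S.f'' x).im)
  have s1 := RBeppo.energy_nonneg (f' := fun x => (S.f' x).re) (f'' := fun x => (S.f'' x).re)
  have s2 := RBeppo.energy_nonneg (f' := fun x => (S.f' x).im) (f'' := fun x => (S.f'' x).im)
  simp only [Complex.reCLM_apply, Complex.imCLM_apply] at p1 p2 z1 z2
  unfold Lambda0.seminorm0
  rw [F.energy_split, S.energy_split, p1, p2]
  apply Real.sqrt_lt_sqrt (add_nonneg s1 s2)
  by_contra hcon
  apply hne
  intro x hx
  have w1 := z1 (by linarith) x hx (r 1) hpos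
  have w2 := z2 (by linarith) x hx (r 1) hpos
  rw [hFS 1 le_rfl hn] at w1 w2
  apply Complex.ext <;> linarith
end
end

section
/- Let n ≥ 2 and let 0 < r₁ < r₂ < … < r_n. Then the (n−1)×(n−1) matrix with entries H_{0,∞}(r_k, r_j), for k, j ∈ {2,…,n}, is invertible. -/
open MeasureTheory Set Filter

noncomputable section

/-- Antiderivative computation. -/
lemma aux_int (a b : ℝ) :
    ∫ w in (0:ℝ)..a, Real.exp (2 * w) * ((a - w) * (b - w)) =
      (1 / 4) * (Real.exp (2 * a) * (1 + (b - a)) - 1 - (a + b)) - (1 / 2) * a * b := by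
  have h : ∀ x ∈ Set.uIcc 0 a, HasDerivAt (fun w : ℝ => Real.exp (2 * w) *
      (1 / 2 * w ^ 2 - 1 / 2 * (a + b) * w + 1 / 2 * a * b - 1 / 2 * w + 1 / 4 * (a + b) + 1 / 4))
      (Real.exp (2 * x) * ((a - x) * (b - x))) x := by
    intro x _
    have h1 : HasDerivAt (fun w : ℝ => Real.exp (2 * w)) (Real.exp (2 * x) * (2 * 1)) x :=
      ((hasDerivAt_id x).const_mul 2).exp
    have h2 : HasDerivAt (fun w : ℝ => 1 / 2 * w ^ 2 - 1 / 2 * (a + b) * w + 1 / 2 * a * b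
        - 1 / 2 * w + 1 / 4 * (a + b) + 1 / 4)
        (1 / 2 * (2 * x) - 1 / 2 * (a + b) * 1 - 1 / 2 * 1) x := by
      have h3 : HasDerivAt (fun w : ℝ => w ^ 2) (2 * x) x := by
        simpa using hasDerivAt_pow 2 x
      exact ((((((h3.const_mul (1 / 2)).sub ((hasDerivAt_id x).const_mul (1 / 2 * (a + b)))).add_const
        (1 / 2 * a * b)).sub ((hasDerivAt_id x).const_mul (1 / 2))).add_const
        (1 / 4 * (a + b))).add_const (1 / 4))
    refine HasDerivAt.congr_deriv (h1.mul h2) ?_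
    ring
  rw [intervalIntegral.integral_eq_sub_of_hasDerivAt h
    (Continuous.intervalIntegrable (by fun_prop) _ _)]
  simp
  ring

/-- The kernel as a Gram integral. -/
lemma aux_gram (a b A : ℝ) (ha : 0 ≤ a) (hab : a ≤ b) (hA : a ≤ A) :
    ∫ w in (0:ℝ)..A, Real.exp (2 * w) * (max (a - w) 0 * max (b - w) 0) =
      (1 / 4) * (Real.exp (2 * a) * (1 + (b - a)) - 1 - (a + b)) - (1 / 2) * a * b := by
  rw [← intervalIntegral.integral_add_adjacent_intervals (b := a)
    (Continuous.intervalIntegrable (by fun_prop) _ _)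
    (Continuous.intervalIntegrable (by fun_prop) _ _), ← aux_int a b]
  have h1 : ∫ w in (0:ℝ)..a, Real.exp (2 * w) * (max (a - w) 0 * max (b - w) 0) =
      ∫ w in (0:ℝ)..a, Real.exp (2 * w) * ((a - w) * (b - w)) := by
    apply intervalIntegral.integral_congr
    intro w hw
    rw [Set.uIcc_of_le ha] at hw
    simp only
    rw [max_eq_left (by linarith [hw.2]), max_eq_left (by linarith [hw.2])]
  have h2 : ∫ w in a..A, Real.exp (2 * w) * (max (a - w) 0 * max (b - w) 0) =
      ∫ w in a..A, (0:ℝ) := by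
    apply intervalIntegral.integral_congr
    intro w hw
    rw [Set.uIcc_of_le hA] at hw
    simp only
    rw [max_eq_right (by linarith [hw.1] : a - w ≤ 0)]
    simp
  rw [h1, h2]
  simp

lemma aux_H (r1 s t A : ℝ) (h1 : 0 < r1) (hs : r1 < s) (ht : r1 < t)
    (hsA : Real.log (s / r1) ≤ A) (htA : Real.log (t / r1) ≤ A) :
    Hfun r1 s t = r1 ^ 2 * ((1 / 2) * Real.log (s / r1) * Real.log (t / r1) +
      ∫ w in (0:ℝ)..A, Real.exp (2 * w) *
        (max (Real.log (s / r1) - w) 0 * max (Real.log (t / r1) - w) 0)) := by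
  have hs0 : 0 < s := h1.trans hs
  have ht0 : 0 < t := h1.trans ht
  have e : ∀ x, 0 < x → Real.exp (2 * (Real.log x - Real.log r1)) = x ^ 2 / r1 ^ 2 := by
    intro x hx
    rw [← Real.log_div hx.ne' h1.ne', two_mul, Real.exp_add, Real.exp_log (by positivity)]
    field_simp
  have hls : 0 ≤ Real.log (s / r1) := Real.log_nonneg (by rw [le_div_iff₀ h1]; linarith)
  have hlt : 0 ≤ Real.log (t / r1) := Real.log_nonneg (by rw [le_div_iff₀ h1]; linarith)
  unfold Hfun Kfun
  rw [if_neg (not_le.2 hs), if_pos ht.le]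
  rcases le_or_gt s t with hst | hst
  · have hl : Real.log (s / r1) ≤ Real.log (t / r1) :=
      Real.log_le_log (by positivity) (by gcongr)
    rw [if_pos hst, aux_gram _ _ _ hls hl hsA, Real.log_div hs0.ne' h1.ne',
      Real.log_div ht0.ne' h1.ne', e s hs0]
    field_simp
    ring
  · have hl : Real.log (t / r1) ≤ Real.log (s / r1) :=
      Real.log_le_log (by positivity) (by gcongr)
    have hc : ∀ w, max (Real.log (s / r1) - w) 0 * max (Real.log (t / r1) - w) 0 =
      max (Real.log (t / r1) - w) 0 * max (Real.log (s / r1) - w) 0 := fun w => mul_comm _ _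
    simp only [hc]
    rw [if_neg (not_le.2 hst), aux_gram _ _ _ hlt hl htA, Real.log_div hs0.ne' h1.ne',
      Real.log_div ht0.ne' h1.ne', Real.log_div hs0.ne' ht0.ne', e t ht0]
    field_simp
    ring

lemma aux_pd (m : ℕ) (α : ℕ → ℝ) (h0 : α 0 = 0)
    (hα : ∀ i j, i < j → j ≤ m → α i < α j) (c : Fin m → ℝ)
    (h : ∑ k : Fin m, ∑ j : Fin m, c k * c j * ((1 / 2) * α (k + 1) * α (j + 1) +
      ∫ w in (0:ℝ)..(α m), Real.exp (2 * w) *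
        (max (α (k + 1) - w) 0 * max (α (j + 1) - w) 0)) = 0) : c = 0 := by
  by_contra hc
  set S : ℝ → ℝ := fun w => ∑ k : Fin m, c k * max (α (k + 1) - w) 0 with hS
  have hScont : Continuous S := by fun_prop
  have hI : ∫ w in (0:ℝ)..(α m), Real.exp (2 * w) * (S w) ^ 2 =
      ∑ k : Fin m, ∑ j : Fin m, c k * c j * ∫ w in (0:ℝ)..(α m), Real.exp (2 * w) *
        (max (α (k + 1) - w) 0 * max (α (j + 1) - w) 0) := by
    simp_rw [← intervalIntegral.integral_const_mul]
    have : ∀ w, Real.exp (2 * w) * (S w) ^ 2 = ∑ k : Fin m, ∑ j : Fin m, c k * c j *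
        (Real.exp (2 * w) * (max (α (k + 1) - w) 0 * max (α (j + 1) - w) 0)) := by
      intro w
      simp only [hS]
      rw [sq, Finset.sum_mul_sum, Finset.mul_sum]
      refine Finset.sum_congr rfl fun k _ => ?_
      rw [Finset.mul_sum]
      refine Finset.sum_congr rfl fun j _ => ?_
      ring
    simp_rw [this]
    rw [intervalIntegral.integral_finsetSum
      (fun k _ => Continuous.intervalIntegrable (by fun_prop) _ _)]
    refine Finset.sum_congr rfl fun k _ => ?_
    rw [intervalIntegral.integral_finsetSum
      (fun k _ => Continuous.intervalIntegrable (by fun_prop) _ _)]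
  have hq : ∑ k : Fin m, ∑ j : Fin m, c k * c j * ((1 / 2) * α (k + 1) * α (j + 1)) =
      (1 / 2) * (∑ k : Fin m, c k * α (k + 1)) ^ 2 := by
    rw [sq, Finset.sum_mul_sum, Finset.mul_sum]
    refine Finset.sum_congr rfl fun k _ => ?_
    rw [Finset.mul_sum]
    refine Finset.sum_congr rfl fun j _ => ?_
    ring
  simp_rw [mul_add, Finset.sum_add_distrib] at h
  rw [← hI, hq] at h
  -- maximal index
  have hne : ({k | c k ≠ 0} : Finset (Fin m)).Nonempty := by
    by_contra hcon
    apply hc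
    funext k
    by_contra hk
    exact hcon ⟨k, by simpa using hk⟩
  obtain ⟨k, hk, hmax⟩ := Finset.exists_max_image _ id hne
  have hk : c k ≠ 0 := by simpa using hk
  have hm : 0 < α m := by
    rw [← h0]; exact hα _ _ (lt_of_le_of_lt (Nat.zero_le _) k.2) le_rfl
  have hSk : S (α k) = c k * (α (k + 1) - α k) := by
    simp only [hS]
    rw [Finset.sum_eq_single k]
    · rw [max_eq_left]
      have := hα k (k + 1) (Nat.lt_succ_self _) k.2
      linarith
    · intro j _ hjk
      rcases lt_or_gt_of_ne hjk with hlt | hgt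
      · rw [max_eq_right, mul_zero]
        have hlt' : (j : ℕ) + 1 ≤ k := hlt
        rcases hlt'.lt_or_eq with h' | h'
        · have := hα _ _ h' k.2.le
          linarith
        · rw [h']; linarith
      · have : c j = 0 := by
          by_contra hj
          have := hmax j (by simpa using hj)
          exact absurd hgt (not_lt.2 this)
        simp [this]
    · simp
  have hSne : S (α k) ≠ 0 := by
    rw [hSk]
    have := hα k (k + 1) (Nat.lt_succ_self _) k.2
    exact mul_ne_zero hk (by linarith)
  have hkmem : α k ∈ Set.Icc 0 (α m) := by
    refine ⟨?_, (hα _ _ k.2 le_rfl).le⟩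
    rcases Nat.eq_zero_or_pos (k : ℕ) with hz | hz
    · rw [hz, h0]
    · rw [← h0]; exact (hα _ _ hz k.2.le).le
  have hpos : 0 < ∫ w in (0:ℝ)..(α m), Real.exp (2 * w) * (S w) ^ 2 := by
    apply intervalIntegral.integral_pos hm (by fun_prop)
    · intro x _; positivity
    · exact ⟨α k, hkmem, by positivity⟩
  nlinarith [sq_nonneg (∑ k : Fin m, c k * α (k + 1))]

/-- the `(n−1)×(n−1)` matrix with entries `H_{0,∞}(r_k, r_j)`,
`k, j ∈ {2,…,n}`, is invertible. -/
theorem stmt8 (n : ℕ) (hn : 2 ≤ n) (r : ℕ → ℝ) (hpos : 0 < r 1)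
    (hmono : ∀ j, 1 ≤ j → j < n → r j < r (j + 1)) :
    (Matrix.of fun k j : Fin (n - 1) =>
        Hfun (r 1) (r ((k : ℕ) + 2)) (r ((j : ℕ) + 2))).det ≠ 0 := by
  have hlt : ∀ i j, 1 ≤ i → i < j → j ≤ n → r i < r j := by
    intro i j hi hij
    induction j, hij using Nat.le_induction with
    | base => intro hj; exact hmono i hi hj
    | succ j hij ih =>
      intro hj
      exact (ih (by omega)).trans (hmono j (by omega) (by omega))
  intro hdet
  obtain ⟨v, hv, hMv⟩ := Matrix.exists_mulVec_eq_zero_iff.2 hdet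
  apply hv
  have hp : ∀ j, 1 ≤ j → j ≤ n → 0 < r j := by
    intro j h1 h2
    rcases h1.lt_or_eq with h | h
    · exact hpos.trans (hlt 1 j le_rfl h h2)
    · rw [← h]; exact hpos
  have hα : ∀ i j, i < j → j ≤ n - 1 →
      Real.log (r (i + 1) / r 1) < Real.log (r (j + 1) / r 1) := by
    intro i j hij hj
    apply Real.log_lt_log (div_pos (hp _ (by omega) (by omega)) hpos)
    have := hlt (i + 1) (j + 1) (by omega) (by omega) (by omega)
    gcongr
  have hαle : ∀ k : Fin (n - 1), Real.log (r ((k : ℕ) + 2) / r 1) ≤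
      Real.log (r (n - 1 + 1) / r 1) := by
    intro k
    have hk := k.2
    rcases (Nat.succ_le_of_lt hk).lt_or_eq with h | h
    · exact (hα _ _ h le_rfl).le
    · have h' : n - 1 + 1 = (k : ℕ) + 2 := by omega
      exact le_of_eq (by rw [h'])
  apply aux_pd (n - 1) (fun i => Real.log (r (i + 1) / r 1)) (by simp [hpos.ne']) hα v
  have hz : ∀ k : Fin (n - 1), ∑ j : Fin (n - 1),
      Hfun (r 1) (r ((k : ℕ) + 2)) (r ((j : ℕ) + 2)) * v j = 0 := fun k => congrFun hMv k
  refine Finset.sum_eq_zero fun k _ => ?_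
  have hz' : r 1 ^ 2 * ∑ j : Fin (n - 1), v k * v j *
      ((1 / 2) * Real.log (r ((k : ℕ) + 2) / r 1) * Real.log (r ((j : ℕ) + 2) / r 1) +
      ∫ w in (0:ℝ)..(Real.log (r (n - 1 + 1) / r 1)), Real.exp (2 * w) *
        (max (Real.log (r ((k : ℕ) + 2) / r 1) - w) 0 *
          max (Real.log (r ((j : ℕ) + 2) / r 1) - w) 0)) = 0 := by
    refine Eq.trans ?_ ((congrArg (fun x => v k * x) (hz k)).trans (mul_zero (v k)))
    rw [Finset.mul_sum, Finset.mul_sum]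
    refine Finset.sum_congr rfl fun j _ => ?_
    have hk := k.2
    have hj := j.2
    rw [aux_H (r 1) _ _ _ hpos (hlt 1 _ le_rfl (by omega) (by omega))
      (hlt 1 _ le_rfl (by omega) (by omega)) (hαle k) (hαle j)]
    ring
  exact (mul_eq_zero.1 hz').resolve_left (by positivity)
end
end
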